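/- Fix a finite connected simple graph G=(V,E) with growth rate γ(G). Then there exists σ² = σ²(G) ∈ [0,∞) such that (max_{x∈V} H_{x,n} − n·γ(G)/#V)/n^{1/2} converges in distribution to the centred normal distribution N(0,σ²) as n → ∞ (interpreting N(0,0) as the Dirac measure at 0), and the same convergence with the same constant σ² holds with max_{x∈V} H_{x,n} replaced by min_{x∈V} H_{x,n}. Moreover σ²(G) = 0 if and only if G is isomorphic to the complete graph on #V vertices. (Theorem 2.) -/

import Mathlib

open MeasureTheory Filter Topology
open scoped ENNReal NNReal Classical

/-- The ballistic deposition height process on a graph `G`, started from `h0`,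
driven by the sequence of chosen vertices `X`. -/
noncomputable def heightProcess {V : Type*} [Fintype V] (G : SimpleGraph V)
    (h0 : V → ℕ) (X : ℕ → V) : ℕ → V → ℕ
  | 0 => h0
  | n + 1 => fun x =>
      if x = X n then
        1 + Finset.univ.sup (fun y =>
          if y = x ∨ G.Adj x y then heightProcess G h0 X n y else 0)
      else heightProcess G h0 X n x

/-- `X` is an i.i.d. sequence of uniformly distributed `V`-valued random variables on `(Ω, μ)`:
every finite cylinder event has the product-of-uniform probabilities. -/
def IsUniformIID {V : Type*} [Fintype V] {Ω : Type*} [MeasurableSpace Ω]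
    (μ : Measure Ω) (X : ℕ → Ω → V) : Prop :=
  (∀ (n : ℕ) (v : V), MeasurableSet {ω | X n ω = v}) ∧
  (∀ (n : ℕ) (f : ℕ → V), μ {ω | ∀ k < n, X k ω = f k} = (Fintype.card V : ℝ≥0∞)⁻¹ ^ n)

/-- `γ` is the growth rate of `G`: `γ > 0` and, for any i.i.d. uniform driving sequence,
almost surely `(#V/n) · max_x H_{x,n} → γ` and `(#V/n) · min_x H_{x,n} → γ`. -/
def IsGrowthRate {V : Type*} [Fintype V] (G : SimpleGraph V) (γ : ℝ) : Prop :=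
  0 < γ ∧
  ∀ {Ω : Type} [MeasurableSpace Ω] (μ : Measure Ω) [IsProbabilityMeasure μ]
    (X : ℕ → Ω → V), IsUniformIID μ X →
    (∀ᵐ ω ∂μ, Tendsto (fun n : ℕ =>
        (Fintype.card V : ℝ) *
          (⨆ x : V, (heightProcess G (fun _ => 0) (fun k => X k ω) n x : ℝ)) / n)
      atTop (𝓝 γ)) ∧
    (∀ᵐ ω ∂μ, Tendsto (fun n : ℕ =>
        (Fintype.card V : ℝ) *
          (⨅ x : V, (heightProcess G (fun _ => 0) (fun k => X k ω) n x : ℝ)) / n)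
      atTop (𝓝 γ))

/-
Depositing one word of particles after another adds up the largest heights, except for an error of
at most the oscillation of the surface left by the first word. On a connected graph there is a word,
two tours of the graph in a row, after which the surface no longer depends on its past except for a
global shift; since such a word keeps turning up at random, the oscillation is bounded in `L²`
uniformly in time. So the largest height is an almost additive function of an i.i.d. word.

An almost additive centred function differs from the sum of its values on `k` blocks of equal length
by an error of order `√k` only, because errors made on disjoint blocks are independent and add up in
quadrature. Comparison with these sums of i.i.d. terms, as the block length grows, gives the
convergence of `variance / n` and, by characteristic functions, the central limit theorem. The
smallest height follows because it differs from the largest one by the oscillation.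

On the complete graph every particle raises the largest height by one, so the limit variance
vanishes. Otherwise two non-adjacent vertices provide two words of equal length whose effects on any
surface differ by a nonzero global shift, and each block of that length contributes a definite
amount of variance.
-/

section Deposition

variable {V : Type*} [Fintype V]

/-- The largest height in the closed neighbourhood `[v]`. -/
noncomputable def closedNbhdMax (G : SimpleGraph V) (h : V → ℕ) (v : V) : ℕ :=
  Finset.univ.sup fun y => if y = v ∨ G.Adj v y then h y else 0

/-- The heights after one particle has been deposited at `v`. -/
noncomputable def deposit (G : SimpleGraph V) (h : V → ℕ) (v : V) : V → ℕ :=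
  Function.update h v (1 + closedNbhdMax G h v)

/-- The heights after particles have been deposited successively at the letters of a word. -/
noncomputable def deposits (G : SimpleGraph V) (h : V → ℕ) (l : List V) : V → ℕ :=
  l.foldl (deposit G) h

/-- The largest height of a configuration. -/
noncomputable def maxHeight (h : V → ℕ) : ℕ := Finset.univ.sup h

/-- The smallest height of a configuration. -/
noncomputable def minHeight [Nonempty V] (h : V → ℕ) : ℕ :=
  Finset.univ.inf' Finset.univ_nonempty h

/-- The oscillation of a configuration; the subtraction never truncates. -/
noncomputable def heightSpread [Nonempty V] (h : V → ℕ) : ℕ := maxHeight h - minHeight h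

lemma le_maxHeight (h : V → ℕ) (x : V) : h x ≤ maxHeight h := Finset.le_sup (Finset.mem_univ x)

lemma maxHeight_le_iff {h : V → ℕ} {c : ℕ} : maxHeight h ≤ c ↔ ∀ x, h x ≤ c := by
  simp [maxHeight]

lemma maxHeight_zero : maxHeight (0 : V → ℕ) = 0 :=
  Nat.le_zero.1 (maxHeight_le_iff.2 fun _ => le_rfl)

lemma exists_eq_maxHeight [Nonempty V] (h : V → ℕ) : ∃ x, h x = maxHeight h := by
  obtain ⟨x, -, hx⟩ := Finset.exists_mem_eq_sup Finset.univ Finset.univ_nonempty h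
  exact ⟨x, hx.symm⟩

lemma maxHeight_add_const [Nonempty V] (h : V → ℕ) (c : ℕ) :
    maxHeight (fun x => h x + c) = maxHeight h + c := by
  obtain ⟨x, hx⟩ := exists_eq_maxHeight h
  refine le_antisymm (maxHeight_le_iff.2 fun y => Nat.add_le_add_right (le_maxHeight h y) c) ?_
  rw [← hx]
  exact le_maxHeight (fun x => h x + c) x

lemma minHeight_le [Nonempty V] (h : V → ℕ) (x : V) : minHeight h ≤ h x :=
  Finset.inf'_le h (Finset.mem_univ x)

lemma le_minHeight_iff [Nonempty V] {h : V → ℕ} {c : ℕ} : c ≤ minHeight h ↔ ∀ x, c ≤ h x := by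
  simp [minHeight]

lemma exists_eq_minHeight [Nonempty V] (h : V → ℕ) : ∃ x, h x = minHeight h := by
  obtain ⟨x, -, hx⟩ := Finset.exists_mem_eq_inf' Finset.univ_nonempty h
  exact ⟨x, hx.symm⟩

lemma minHeight_le_maxHeight [Nonempty V] (h : V → ℕ) : minHeight h ≤ maxHeight h :=
  (minHeight_le h (Classical.arbitrary V)).trans (le_maxHeight h _)

lemma minHeight_add_heightSpread [Nonempty V] (h : V → ℕ) :
    minHeight h + heightSpread h = maxHeight h :=
  Nat.add_sub_of_le (minHeight_le_maxHeight h)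

lemma heightSpread_add_const [Nonempty V] (h : V → ℕ) (c : ℕ) :
    heightSpread (fun x => h x + c) = heightSpread h := by
  have hmax := maxHeight_add_const h c
  have hmin : minHeight (fun x => h x + c) = minHeight h + c := by
    obtain ⟨x, hx⟩ := exists_eq_minHeight h
    refine le_antisymm ?_ (le_minHeight_iff.2 fun y => Nat.add_le_add_right (minHeight_le h y) c)
    rw [← hx]
    exact minHeight_le (fun x => h x + c) x
  rw [heightSpread, heightSpread, hmax, hmin, Nat.add_sub_add_right]

lemma heightSpread_zero [Nonempty V] : heightSpread (0 : V → ℕ) = 0 :=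
  Nat.sub_eq_zero_of_le (maxHeight_zero.trans_le (Nat.zero_le _))

variable (G : SimpleGraph V)

lemma closedNbhdMax_le_iff {h : V → ℕ} {v : V} {c : ℕ} :
    closedNbhdMax G h v ≤ c ↔ ∀ y, y = v ∨ G.Adj v y → h y ≤ c := by
  simp only [closedNbhdMax, Finset.sup_le_iff, Finset.mem_univ, true_imp_iff]
  refine forall_congr' fun y => ?_
  split_ifs with hy <;> simp [hy]

lemma le_closedNbhdMax (h : V → ℕ) {v y : V} (hy : y = v ∨ G.Adj v y) :
    h y ≤ closedNbhdMax G h v :=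
  (closedNbhdMax_le_iff G).1 le_rfl y hy

lemma closedNbhdMax_le_maxHeight (h : V → ℕ) (v : V) : closedNbhdMax G h v ≤ maxHeight h :=
  (closedNbhdMax_le_iff G).2 fun y _ => le_maxHeight h y

lemma closedNbhdMax_mono {h h' : V → ℕ} (hh : h ≤ h') (v : V) :
    closedNbhdMax G h v ≤ closedNbhdMax G h' v :=
  (closedNbhdMax_le_iff G).2 fun y hy => (hh y).trans (le_closedNbhdMax G h' hy)

lemma closedNbhdMax_add_const (h : V → ℕ) (c : ℕ) (v : V) :
    closedNbhdMax G (fun x => h x + c) v = closedNbhdMax G h v + c := by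
  have hc : c ≤ closedNbhdMax G (fun x => h x + c) v :=
    (Nat.le_add_left c (h v)).trans (le_closedNbhdMax G (fun x => h x + c) (Or.inl rfl))
  refine le_antisymm ((closedNbhdMax_le_iff G).2 fun y hy =>
    Nat.add_le_add_right (le_closedNbhdMax G h hy) c) ?_
  refine Nat.add_le_of_le_sub hc ((closedNbhdMax_le_iff G).2 fun y hy => ?_)
  exact Nat.le_sub_of_add_le (le_closedNbhdMax G (fun x => h x + c) hy)

@[simp] lemma deposit_self (h : V → ℕ) (v : V) : deposit G h v v = 1 + closedNbhdMax G h v :=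
  Function.update_self ..

lemma deposit_of_ne (h : V → ℕ) {v x : V} (hx : x ≠ v) : deposit G h v x = h x :=
  Function.update_of_ne hx ..

lemma deposit_mono {h h' : V → ℕ} (hh : h ≤ h') (v : V) : deposit G h v ≤ deposit G h' v :=
  update_le_update_iff.2
    ⟨Nat.add_le_add_left (closedNbhdMax_mono G hh v) 1, fun x _ => hh x⟩

lemma deposit_add_const (h : V → ℕ) (c : ℕ) (v : V) :
    deposit G (fun x => h x + c) v = fun x => deposit G h v x + c := by
  funext x
  obtain rfl | hx := eq_or_ne x v
  · rw [deposit_self, deposit_self, closedNbhdMax_add_const, add_assoc]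
  · rw [deposit_of_ne G _ hx, deposit_of_ne G h hx]

lemma le_deposit (h : V → ℕ) (v : V) : h ≤ deposit G h v :=
  le_update_self_iff.2 ((le_closedNbhdMax G h (Or.inl rfl)).trans (Nat.le_add_left _ 1))

lemma maxHeight_deposit_le (h : V → ℕ) (v : V) : maxHeight (deposit G h v) ≤ maxHeight h + 1 := by
  refine maxHeight_le_iff.2 fun x => ?_
  obtain rfl | hx := eq_or_ne x v
  · rw [deposit_self, add_comm]
    exact Nat.add_le_add_right (closedNbhdMax_le_maxHeight G h x) 1
  · rw [deposit_of_ne G h hx]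
    exact (le_maxHeight h x).trans (Nat.le_succ _)

lemma deposits_cons (h : V → ℕ) (v : V) (l : List V) :
    deposits G h (v :: l) = deposits G (deposit G h v) l := rfl

lemma deposits_append (h : V → ℕ) (l l' : List V) :
    deposits G h (l ++ l') = deposits G (deposits G h l) l' :=
  List.foldl_append

lemma deposits_concat (h : V → ℕ) (l : List V) (v : V) :
    deposits G h (l ++ [v]) = deposit G (deposits G h l) v :=
  deposits_append G h l [v]

lemma deposits_mono {h h' : V → ℕ} (hh : h ≤ h') (l : List V) :
    deposits G h l ≤ deposits G h' l := by
  induction l generalizing h h' with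
  | nil => exact hh
  | cons v _ ih => exact ih (deposit_mono G hh v)

lemma deposits_add_const (h : V → ℕ) (c : ℕ) (l : List V) :
    deposits G (fun x => h x + c) l = fun x => deposits G h l x + c := by
  induction l generalizing h with
  | nil => rfl
  | cons v l ih => rw [deposits_cons, deposit_add_const, ih, deposits_cons]

lemma le_deposits (h : V → ℕ) (l : List V) : h ≤ deposits G h l := by
  induction l generalizing h with
  | nil => exact le_rfl
  | cons v l ih => exact (le_deposit G h v).trans (ih _)

lemma maxHeight_deposits_le (h : V → ℕ) (l : List V) :
    maxHeight (deposits G h l) ≤ maxHeight h + l.length := by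
  induction l generalizing h with
  | nil => exact le_rfl
  | cons v l ih =>
    have hl := ih (deposit G h v)
    have hv := maxHeight_deposit_le G h v
    rw [deposits_cons, List.length_cons]
    omega

lemma heightSpread_deposits_le [Nonempty V] (h : V → ℕ) (l : List V) :
    heightSpread (deposits G h l) ≤ heightSpread h + l.length := by
  have hmax := maxHeight_deposits_le G h l
  have hmin : minHeight h ≤ minHeight (deposits G h l) :=
    le_minHeight_iff.2 fun x => (minHeight_le h x).trans (le_deposits G h l x)
  unfold heightSpread
  omega

lemma heightSpread_deposits_zero_le [Nonempty V] (l : List V) :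
    heightSpread (deposits G 0 l) ≤ l.length :=
  (heightSpread_deposits_le G 0 l).trans_eq (by rw [heightSpread_zero, zero_add])

lemma maxHeight_deposits_le_add (h : V → ℕ) (l : List V) :
    maxHeight (deposits G h l) ≤ maxHeight h + maxHeight (deposits G 0 l) := by
  refine maxHeight_le_iff.2 fun x => ?_
  have hx : deposits G h l x ≤ deposits G (fun y => (0 : V → ℕ) y + maxHeight h) l x :=
    deposits_mono G (fun y => by simpa using le_maxHeight h y) l x
  rw [deposits_add_const G 0 (maxHeight h)] at hx
  beta_reduce at hx
  have hmax := le_maxHeight (deposits G 0 l) x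
  omega

lemma add_le_maxHeight_deposits [Nonempty V] (h : V → ℕ) (l : List V) :
    minHeight h + maxHeight (deposits G 0 l) ≤ maxHeight (deposits G h l) := by
  obtain ⟨x, hx⟩ := exists_eq_maxHeight (deposits G 0 l)
  have hle : deposits G (fun y => (0 : V → ℕ) y + minHeight h) l x ≤ deposits G h l x :=
    deposits_mono G (fun y => by simpa using minHeight_le h y) l x
  rw [deposits_add_const G 0 (minHeight h)] at hle
  beta_reduce at hle
  have hmax := le_maxHeight (deposits G h l) x
  omega

lemma add_count_le_deposits (h : V → ℕ) (l : List V) (x : V) :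
    h x + l.count x ≤ deposits G h l x := by
  induction l generalizing h with
  | nil => exact le_rfl
  | cons v l ih =>
    refine le_trans ?_ (ih (deposit G h v))
    obtain rfl | hx := eq_or_ne x v
    · have := le_closedNbhdMax G h (Or.inl rfl : x = x ∨ G.Adj x x)
      rw [deposit_self, List.count_cons_self]
      omega
    · rw [deposit_of_ne G h hx, List.count_cons_of_ne hx.symm]

lemma deposits_le_add_count (h : V → ℕ) {l : List V} (hl : ∀ u ∈ l, ∀ v ∈ l, ¬G.Adj u v) (x : V) :
    deposits G h l x ≤ maxHeight h + l.count x := by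
  induction l using List.reverseRecOn generalizing x with
  | nil => exact le_maxHeight h x
  | append_singleton l v ih =>
    replace ih := ih fun a ha b hb => hl a (by simp [ha]) b (by simp [hb])
    rw [deposits_concat]
    obtain rfl | hx := eq_or_ne x v
    · suffices closedNbhdMax G (deposits G h l) x ≤ maxHeight h + l.count x by
        rw [deposit_self, List.count_append, List.count_singleton_self]
        omega
      refine (closedNbhdMax_le_iff G).2 fun y hy => ?_
      obtain rfl | hadj := hy
      · exact ih y
      · have hy : y ∉ l := fun hy => hl x (by simp) y (by simp [hy]) hadj
        have := ih y
        rw [List.count_eq_zero_of_not_mem hy] at this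
        omega
    · rw [deposit_of_ne G _ hx, List.count_append]
      exact (ih x).trans (by omega)

lemma maxHeight_deposits_top [Nonempty V] (l : List V) :
    maxHeight (deposits (⊤ : SimpleGraph V) 0 l) = l.length := by
  induction l using List.reverseRecOn with
  | nil => exact maxHeight_zero
  | append_singleton l v ih =>
    rw [deposits_concat, List.length_append, List.length_singleton, ← ih]
    refine le_antisymm (maxHeight_deposit_le _ _ _) ?_
    obtain ⟨y, hy⟩ := exists_eq_maxHeight (deposits (⊤ : SimpleGraph V) 0 l)
    have hnbhd : y = v ∨ (⊤ : SimpleGraph V).Adj v y := by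
      simpa [SimpleGraph.top_adj, eq_comm] using em (y = v)
    have hle := le_closedNbhdMax (⊤ : SimpleGraph V) (deposits ⊤ 0 l) hnbhd
    have hmax := le_maxHeight (deposit (⊤ : SimpleGraph V) (deposits ⊤ 0 l) v) v
    rw [deposit_self] at hmax
    omega

lemma heightProcess_eq_deposits (h : V → ℕ) (X : ℕ → V) (n : ℕ) :
    heightProcess G h X n = deposits G h (List.ofFn fun i : Fin n => X i) := by
  induction n with
  | zero => simp [heightProcess, deposits]
  | succ n ih =>
    funext x
    rw [List.ofFn_succ', List.concat_eq_append, deposits_concat, deposit, Function.update_apply]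
    obtain rfl | hx := eq_or_ne x (X n)
    · simp [heightProcess, ih, closedNbhdMax]
    · simp [heightProcess, ih, hx]

lemma iSup_natCast_eq_maxHeight [Nonempty V] (h : V → ℕ) :
    ⨆ x, (h x : ℝ) = maxHeight h := by
  obtain ⟨x, hx⟩ := exists_eq_maxHeight h
  refine le_antisymm (ciSup_le fun y => mod_cast le_maxHeight h y) ?_
  rw [← hx]
  exact le_ciSup (f := fun y => (h y : ℝ)) (Set.finite_range _).bddAbove x

lemma iInf_natCast_eq_minHeight [Nonempty V] (h : V → ℕ) :
    ⨅ x, (h x : ℝ) = minHeight h := by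
  obtain ⟨x, hx⟩ := exists_eq_minHeight h
  refine le_antisymm ?_ (le_ciInf fun y => mod_cast minHeight_le h y)
  rw [← hx]
  exact ciInf_le (f := fun y => (h y : ℝ)) (Set.finite_range _).bddBelow x

end Deposition

lemma exists_closedWalk_forall_mem_support {V : Type*} {G : SimpleGraph V} (hG : G.Connected)
    (o : V) (s : Finset V) : ∃ p : G.Walk o o, ∀ x ∈ s, x ∈ p.support := by
  induction s using Finset.induction_on with
  | empty => exact ⟨SimpleGraph.Walk.nil, by simp⟩
  | insert a s _ ih =>
    obtain ⟨p, hp⟩ := ih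
    obtain ⟨q⟩ := hG.preconnected o a
    refine ⟨p.append (q.append q.reverse), fun x hx => ?_⟩
    rw [SimpleGraph.Walk.mem_support_append_iff, SimpleGraph.Walk.mem_support_append_iff]
    obtain rfl | hx := Finset.mem_insert.1 hx
    · exact Or.inr (Or.inl q.end_mem_support)
    · exact Or.inl (hp x hx)

section Renewal

variable {V : Type*} [Fintype V] {G : SimpleGraph V}

/-- A word is a renewal word if, up to a global shift, the configuration it produces does not
depend on the initial one: after such a word the process forgets its past. -/
def IsRenewalWord (G : SimpleGraph V) (W : List V) : Prop :=
  ∀ h, ∃ m : ℕ, deposits G h W = fun x => deposits G 0 W x + m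

lemma le_deposits_support_tail {u v : V} (p : G.Walk u v) {h : V → ℕ} {s : Set V}
    (hs : ∀ x ∈ s, h x ≤ h u) {x : V} (hx : x ∈ s ∨ x ∈ p.support) :
    deposits G h p.support.tail x ≤ deposits G h p.support.tail v := by
  induction p generalizing h s with
  | nil =>
    obtain hx | hx := hx
    · exact hs x hx
    · rw [SimpleGraph.Walk.mem_support_nil_iff.1 hx]
  | @cons u w v hadj p ih =>
    rw [SimpleGraph.Walk.support_cons, List.tail_cons, ← SimpleGraph.Walk.cons_tail_support p,
      deposits_cons]
    have hu : h u < deposit G h w w := by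
      have := le_closedNbhdMax G h (Or.inr hadj.symm : u = w ∨ G.Adj w u)
      rw [deposit_self]
      omega
    refine ih (s := insert u s) (fun y hy => ?_) ?_
    · obtain rfl | hyw := eq_or_ne y w
      · exact le_rfl
      · rw [deposit_of_ne G h hyw]
        obtain rfl | hy := hy
        · exact hu.le
        · exact (hs y hy).trans hu.le
    · rw [SimpleGraph.Walk.support_cons, List.mem_cons] at hx
      rw [Set.mem_insert_iff]
      tauto

lemma deposit_self_of_adj_of_forall_le {u w : V} (hadj : G.Adj u w) {h : V → ℕ}
    (hu : ∀ x, h x ≤ h u) : deposit G h w w = 1 + h u := by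
  rw [deposit_self]
  exact congrArg (1 + ·) (le_antisymm ((closedNbhdMax_le_iff G).2 fun y _ => hu y)
    (le_closedNbhdMax G h (Or.inr hadj.symm)))

lemma deposits_support_tail_eq_add {u v : V} (p : G.Walk u v) {h h' : V → ℕ} {s : Set V} {c : ℕ}
    (hus : u ∈ s) (hu : ∀ x, h x ≤ h u) (hu' : ∀ x, h' x ≤ h' u) (hs : ∀ x ∈ s, h x = h' x + c)
    {x : V} (hx : x ∈ s ∨ x ∈ p.support) :
    deposits G h p.support.tail x = deposits G h' p.support.tail x + c := by
  induction p generalizing h h' s with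
  | nil =>
    obtain hx | hx := hx
    · exact hs x hx
    · rw [SimpleGraph.Walk.mem_support_nil_iff.1 hx]
      exact hs _ hus
  | @cons u w v hadj p ih =>
    rw [SimpleGraph.Walk.support_cons, List.tail_cons, ← SimpleGraph.Walk.cons_tail_support p,
      deposits_cons, deposits_cons]
    have hmax {g : V → ℕ} (hg : ∀ x, g x ≤ g u) (y : V) : deposit G g w y ≤ deposit G g w w := by
      rw [deposit_self_of_adj_of_forall_le hadj hg]
      obtain rfl | hyw := eq_or_ne y w
      · exact (deposit_self_of_adj_of_forall_le hadj hg).le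
      · rw [deposit_of_ne G g hyw]
        exact (hg y).trans (Nat.le_add_left _ 1)
    refine ih (s := insert w s) (Set.mem_insert w s) (hmax hu) (hmax hu') (fun y hy => ?_) ?_
    · obtain rfl | hyw := eq_or_ne y w
      · rw [deposit_self_of_adj_of_forall_le hadj hu,
          deposit_self_of_adj_of_forall_le hadj hu', hs u hus, add_assoc]
      · rw [deposit_of_ne G h hyw, deposit_of_ne G h' hyw]
        exact hs y (hy.resolve_left hyw)
    · rw [SimpleGraph.Walk.support_cons, List.mem_cons] at hx
      obtain hx | rfl | hx := hx
      · exact Or.inl (Set.mem_insert_of_mem w hx)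
      · exact Or.inl (Set.mem_insert_of_mem w hus)
      · exact Or.inr hx

-- The first tour of the graph makes its endpoint the highest vertex; from then on the second tour
-- climbs by one at every step, whatever the other heights are.
lemma isRenewalWord_support_append_support_tail {o : V} (p : G.Walk o o)
    (hp : ∀ x, x ∈ p.support) : IsRenewalWord G (p.support ++ p.support.tail) := by
  have hmax (h : V → ℕ) (x : V) : deposits G h p.support x ≤ deposits G h p.support o := by
    rw [← SimpleGraph.Walk.cons_tail_support p, deposits_cons]
    exact le_deposits_support_tail p (s := ∅) (by simp) (Or.inr (hp x))
  intro h
  obtain ⟨c, hc⟩ := Nat.exists_eq_add_of_le (deposits_mono G (zero_le : 0 ≤ h) p.support o)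
  refine ⟨c, funext fun x => ?_⟩
  rw [deposits_append, deposits_append]
  refine deposits_support_tail_eq_add p (Set.mem_singleton o) (hmax h) (hmax 0) ?_
    (Or.inr (hp x))
  rintro _ rfl
  exact hc

lemma exists_isRenewalWord (hG : G.Connected) : ∃ W, IsRenewalWord G W := by
  obtain ⟨o⟩ := hG.nonempty
  obtain ⟨p, hp⟩ := exists_closedWalk_forall_mem_support hG o Finset.univ
  exact ⟨_, isRenewalWord_support_append_support_tail p fun x => hp x (Finset.mem_univ x)⟩

lemma IsRenewalWord.heightSpread_deposits_le_length [Nonempty V] {W : List V}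
    (hW : IsRenewalWord G W) (h : V → ℕ) : heightSpread (deposits G h W) ≤ W.length := by
  obtain ⟨m, hm⟩ := hW h
  rw [hm, heightSpread_add_const]
  exact heightSpread_deposits_zero_le G W

lemma IsRenewalWord.maxHeight_deposits_le_add_length [Nonempty V] {W : List V}
    (hW : IsRenewalWord G W) (h : V → ℕ) (x : V) :
    maxHeight (deposits G h W) ≤ deposits G h W x + W.length := by
  rw [← minHeight_add_heightSpread]
  exact Nat.add_le_add (minHeight_le _ x) (hW.heightSpread_deposits_le_length h)

lemma maxHeight_deposits_replicate_append_le {a b : V} (hab : a ≠ b) (hadj : ¬G.Adj a b)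
    (h : V → ℕ) (j : ℕ) :
    maxHeight (deposits G h (List.replicate j a ++ List.replicate j b)) ≤ maxHeight h + j := by
  have hba : ¬G.Adj b a := fun h => hadj h.symm
  have hindep : ∀ u ∈ List.replicate j a ++ List.replicate j b,
      ∀ v ∈ List.replicate j a ++ List.replicate j b, ¬G.Adj u v := by
    simp only [List.mem_append, List.mem_replicate]
    rintro u (⟨-, rfl⟩ | ⟨-, rfl⟩) v (⟨-, rfl⟩ | ⟨-, rfl⟩) <;> simp [hadj, hba]
  refine maxHeight_le_iff.2 fun x => (deposits_le_add_count G h hindep x).trans ?_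
  rw [List.count_append, List.count_replicate, List.count_replicate]
  split_ifs with hxa hxb <;> simp_all

-- Piling `2j` particles on one vertex, or `j` on each of two non-adjacent ones, takes the same
-- number of steps; two renewal words around them turn the difference into a mere shift.
lemma IsRenewalWord.exists_words_deposits_eq_add [Nonempty V] {W : List V}
    (hW : IsRenewalWord G W) (hG : G ≠ ⊤) :
    ∃ w₁ w₂ : List V, w₁.length = w₂.length ∧
      ∀ h, ∃ δ > 0, deposits G h w₁ = fun x => deposits G h w₂ x + δ := by
  obtain ⟨a, b, hab, hadj⟩ := SimpleGraph.ne_top_iff_exists_not_adj.1 hG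
  set j := 2 * W.length + 1
  set u₁ := List.replicate (2 * j) a
  set u₂ := List.replicate j a ++ List.replicate j b
  have hlen : u₁.length = u₂.length := by simp [u₁, u₂, two_mul]
  refine ⟨W ++ (u₁ ++ W), W ++ (u₂ ++ W), by simp only [List.length_append, hlen], fun h => ?_⟩
  simp only [deposits_append]
  generalize hg : deposits G h W = g
  obtain ⟨m₁, hm₁⟩ := hW (deposits G g u₁)
  obtain ⟨m₂, hm₂⟩ := hW (deposits G g u₂)
  suffices m₂ < m₁ by
    refine ⟨m₁ - m₂, Nat.sub_pos_of_lt this, ?_⟩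
    rw [hm₁, hm₂]
    funext x
    beta_reduce
    omega
  have hlow : g a + 2 * j ≤ deposits G 0 W a + m₁ := by
    have hcount := add_count_le_deposits G g (List.replicate (2 * j) a) a
    rw [List.count_replicate_self] at hcount
    exact hcount.trans ((le_deposits G _ W a).trans_eq (congrFun hm₁ a))
  have hupp : deposits G 0 W a + m₂ ≤ g a + W.length + j + W.length := by
    have hspread : maxHeight g ≤ g a + W.length :=
      hg ▸ hW.maxHeight_deposits_le_add_length h a
    calc deposits G 0 W a + m₂ = deposits G (deposits G g u₂) W a := (congrFun hm₂ a).symm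
      _ ≤ maxHeight (deposits G (deposits G g u₂) W) := le_maxHeight _ a
      _ ≤ maxHeight (deposits G g u₂) + W.length := maxHeight_deposits_le G _ W
      _ ≤ g a + W.length + j + W.length := by
        have hu₂ : maxHeight (deposits G g u₂) ≤ maxHeight g + j :=
          maxHeight_deposits_replicate_append_le hab hadj g j
        omega
  omega

end Renewal

section WordMean

open scoped BigOperators

variable {V : Type*} [Fintype V]

/-- The average of `f` over all words of length `n`, that is, the expectation of `f` at a uniformly
random word. -/
noncomputable def wordMean {E : Type*} [AddCommMonoid E] [Module ℚ≥0 E] (n : ℕ) (f : List V → E) :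
    E :=
  𝔼 u : Fin n → V, f (List.ofFn u)

section Module

variable {E : Type*} [AddCommMonoid E] [Module ℚ≥0 E]

lemma wordMean_congr {n : ℕ} {f g : List V → E} (h : ∀ l, l.length = n → f l = g l) :
    wordMean n f = wordMean n g :=
  Finset.expect_congr rfl fun _ _ => h _ List.length_ofFn

lemma wordMean_append (m n : ℕ) (f : List V → E) :
    wordMean (m + n) f = wordMean m fun u => wordMean n fun v => f (u ++ v) := by
  simp only [wordMean]
  rw [← Finset.expect_product', Finset.univ_product_univ]
  refine (Fintype.expect_equiv (Fin.appendEquiv m n) _ _ fun p => ?_).symm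
  rw [← List.ofFn_fin_append]
  rfl

lemma wordMean_const [Nonempty V] (n : ℕ) (c : E) : wordMean n (fun _ : List V => c) = c :=
  Fintype.expect_const c

lemma wordMean_take [Nonempty V] (m n : ℕ) (f : List V → E) :
    wordMean (m + n) (fun l => f (l.take m)) = wordMean m f := by
  rw [wordMean_append]
  refine wordMean_congr fun u hu => ?_
  simp only [← hu, List.take_left, wordMean_const]

lemma wordMean_drop [Nonempty V] (m n : ℕ) (f : List V → E) :
    wordMean (m + n) (fun l => f (l.drop m)) = wordMean n f := by
  rw [wordMean_append]
  refine (wordMean_congr fun u hu => ?_).trans (wordMean_const m (wordMean n f))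
  simp only [← hu, List.drop_left]

lemma wordMean_take_mul_drop {R : Type*} [Semiring R] [Module ℚ≥0 R] [IsScalarTower ℚ≥0 R R]
    [SMulCommClass ℚ≥0 R R] (m n : ℕ) (f g : List V → R) :
    wordMean (m + n) (fun l => f (l.take m) * g (l.drop m)) = wordMean m f * wordMean n g := by
  calc wordMean (m + n) (fun l => f (l.take m) * g (l.drop m))
      = wordMean m fun u => f u * wordMean n g := by
        rw [wordMean_append]
        refine wordMean_congr fun u hu => ?_
        simp only [← hu, List.take_left, List.drop_left, wordMean, Finset.mul_expect]
    _ = wordMean m f * wordMean n g := (Finset.expect_mul ..).symm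

lemma wordMean_add (n : ℕ) (f g : List V → E) :
    wordMean n (fun l => f l + g l) = wordMean n f + wordMean n g :=
  Finset.expect_add_distrib ..

lemma wordMean_const_mul {R : Type*} [Semiring R] [Module ℚ≥0 R] [SMulCommClass ℚ≥0 R R] (n : ℕ)
    (c : R) (f : List V → R) : wordMean n (fun l => c * f l) = c * wordMean n f :=
  (Finset.mul_expect ..).symm

end Module

lemma wordMean_sub {E : Type*} [AddCommGroup E] [Module ℚ≥0 E] (n : ℕ) (f g : List V → E) :
    wordMean n (fun l => f l - g l) = wordMean n f - wordMean n g :=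
  Finset.expect_sub_distrib ..

lemma wordMean_mono {n : ℕ} {f g : List V → ℝ} (h : ∀ l, l.length = n → f l ≤ g l) :
    wordMean n f ≤ wordMean n g :=
  Finset.expect_le_expect fun _ _ => h _ List.length_ofFn

lemma wordMean_nonneg {n : ℕ} {f : List V → ℝ} (h : ∀ l, 0 ≤ f l) : 0 ≤ wordMean n f :=
  Finset.expect_nonneg fun _ _ => h _

lemma div_le_wordMean {f : List V → ℝ} (h : ∀ l, 0 ≤ f l) (w : List V) :
    f w / (Fintype.card V : ℝ) ^ w.length ≤ wordMean w.length f := by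
  rw [wordMean, Fintype.expect_eq_sum_div_card, Fintype.card_fun, Fintype.card_fin, Nat.cast_pow]
  gcongr
  simpa only [List.ofFn_get] using Finset.single_le_sum (f := fun u : Fin w.length → V =>
    f (List.ofFn u)) (fun _ _ => h _) (Finset.mem_univ w.get)

lemma wordMean_mul_sq_le (n : ℕ) (f g : List V → ℝ) :
    wordMean n (fun l => f l * g l) ^ 2 ≤
      wordMean n (fun l => f l ^ 2) * wordMean n fun l => g l ^ 2 :=
  Finset.expect_mul_sq_le_sq_mul_sq ..

/-- The `L²` norm of a function of a uniformly random word of length `n`. -/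
noncomputable def wordNorm (n : ℕ) : Seminorm ℝ (List V → ℝ) :=
  Seminorm.of (fun f => √(wordMean n fun l => f l ^ 2))
    (fun f g => by
      have hf : 0 ≤ wordMean n fun l => f l ^ 2 := wordMean_nonneg fun _ => sq_nonneg _
      have hg : 0 ≤ wordMean n fun l => g l ^ 2 := wordMean_nonneg fun _ => sq_nonneg _
      have hfg := Real.le_sqrt_of_sq_le (wordMean_mul_sq_le n f g)
      rw [Real.sqrt_mul hf] at hfg
      refine Real.sqrt_le_iff.2 ⟨by positivity, ?_⟩
      calc wordMean n (fun l => (f l + g l) ^ 2)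
          = wordMean n (fun l => f l ^ 2) + wordMean n (fun l => g l ^ 2) +
              2 * wordMean n fun l => f l * g l := by
            rw [← wordMean_add, ← wordMean_const_mul, ← wordMean_add]
            exact wordMean_congr fun l _ => by ring
        _ ≤ _ := by
            rw [add_sq, Real.sq_sqrt hf, Real.sq_sqrt hg]
            linarith)
    (fun c f => by
      simp only [Pi.smul_apply, smul_eq_mul, mul_pow]
      rw [wordMean_const_mul, Real.sqrt_mul (sq_nonneg c), Real.sqrt_sq_eq_abs, Real.norm_eq_abs])

lemma wordNorm_sq (n : ℕ) (f : List V → ℝ) : wordNorm n f ^ 2 = wordMean n fun l => f l ^ 2 :=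
  Real.sq_sqrt (wordMean_nonneg fun _ => sq_nonneg _)

lemma wordNorm_congr_abs {n : ℕ} {f g : List V → ℝ} (h : ∀ l, l.length = n → |f l| = |g l|) :
    wordNorm n f = wordNorm n g :=
  congrArg Real.sqrt (wordMean_congr fun l hl => sq_eq_sq_iff_abs_eq_abs _ _ |>.2 (h l hl))

lemma wordNorm_congr {n : ℕ} {f g : List V → ℝ} (h : ∀ l, l.length = n → f l = g l) :
    wordNorm n f = wordNorm n g :=
  wordNorm_congr_abs fun l hl => congrArg _ (h l hl)

lemma wordNorm_mono {n : ℕ} {f g : List V → ℝ} (h : ∀ l, l.length = n → |f l| ≤ |g l|) :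
    wordNorm n f ≤ wordNorm n g :=
  Real.sqrt_le_sqrt (wordMean_mono fun l hl => sq_le_sq.2 (h l hl))

lemma wordNorm_const [Nonempty V] (n : ℕ) (c : ℝ) : wordNorm n (fun _ : List V => c) = |c| := by
  rw [← Real.sqrt_sq_eq_abs]
  exact congrArg Real.sqrt (wordMean_const n (c ^ 2))

lemma wordNorm_take [Nonempty V] (m n : ℕ) (f : List V → ℝ) :
    wordNorm (m + n) (fun l => f (l.take m)) = wordNorm m f :=
  congrArg Real.sqrt (wordMean_take m n fun l => f l ^ 2)

lemma wordNorm_drop [Nonempty V] (m n : ℕ) (f : List V → ℝ) :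
    wordNorm (m + n) (fun l => f (l.drop m)) = wordNorm n f :=
  congrArg Real.sqrt (wordMean_drop m n fun l => f l ^ 2)

lemma wordNorm_take_mul_drop (m n : ℕ) (f g : List V → ℝ) :
    wordNorm (m + n) (fun l => f (l.take m) * g (l.drop m)) = wordNorm m f * wordNorm n g := by
  refine (sq_eq_sq₀ (apply_nonneg _ _) (by positivity)).1 ?_
  simp only [mul_pow, wordNorm_sq]
  exact wordMean_take_mul_drop m n (fun l => f l ^ 2) fun l => g l ^ 2

lemma wordNorm_take_add_drop_sq [Nonempty V] (m n : ℕ) {f : List V → ℝ} (g : List V → ℝ)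
    (hf : wordMean m f = 0) :
    wordNorm (m + n) (fun l => f (l.take m) + g (l.drop m)) ^ 2 =
      wordNorm m f ^ 2 + wordNorm n g ^ 2 := by
  have hcross : wordMean (m + n) (fun l => f (l.take m) * g (l.drop m)) = 0 := by
    rw [wordMean_take_mul_drop, hf, zero_mul]
  calc wordNorm (m + n) (fun l => f (l.take m) + g (l.drop m)) ^ 2
      = wordMean (m + n) (fun l => f (l.take m) ^ 2) +
          wordMean (m + n) (fun l => g (l.drop m) ^ 2) +
          2 * wordMean (m + n) (fun l => f (l.take m) * g (l.drop m)) := by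
        rw [wordNorm_sq, ← wordMean_add, ← wordMean_const_mul, ← wordMean_add]
        exact wordMean_congr fun l _ => by ring
    _ = wordNorm m f ^ 2 + wordNorm n g ^ 2 := by
        rw [hcross, wordNorm_sq, wordNorm_sq, mul_zero, add_zero,
          wordMean_take m n fun l => f l ^ 2, wordMean_drop m n fun l => g l ^ 2]

lemma abs_wordMean_le_wordNorm [Nonempty V] (n : ℕ) (f : List V → ℝ) :
    |wordMean n f| ≤ wordNorm n f := by
  refine Real.abs_le_sqrt ?_
  simpa [wordMean_const] using wordMean_mul_sq_le n f fun _ => 1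

lemma wordMean_abs_le_wordNorm [Nonempty V] (n : ℕ) (f : List V → ℝ) :
    wordMean n (fun l => |f l|) ≤ wordNorm n f :=
  (le_abs_self _).trans ((abs_wordMean_le_wordNorm n _).trans_eq
    (wordNorm_congr_abs fun _ _ => abs_abs _))

lemma wordNorm_inv_mul_sub_inv_mul_le (n : ℕ) (f g : List V → ℝ) {a b : ℝ} (hb : 0 < b)
    (hba : b ≤ a) :
    wordNorm n ((fun l => a⁻¹ * f l) - fun l => b⁻¹ * g l) ≤
      wordNorm n (fun l => f l - g l) / a + wordNorm n g / b * (1 - b / a) := by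
  have ha := hb.trans_le hba
  have hcoef : 0 ≤ b⁻¹ - a⁻¹ := sub_nonneg.2 (inv_anti₀ hb hba)
  have hsplit : ((fun l => a⁻¹ * f l) - fun l => b⁻¹ * g l) =
      a⁻¹ • (fun l => f l - g l) - (b⁻¹ - a⁻¹) • g := by
    funext l
    simp only [Pi.sub_apply, Pi.smul_apply, smul_eq_mul]
    ring
  rw [hsplit]
  refine (map_sub_le_add _ _ _).trans_eq ?_
  rw [map_smul_eq_mul, map_smul_eq_mul, Real.norm_of_nonneg (inv_nonneg.2 ha.le),
    Real.norm_of_nonneg hcoef]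
  field_simp

/-- The variance of a function of a uniformly random word of length `n`. -/
noncomputable def wordVar (n : ℕ) (f : List V → ℝ) : ℝ :=
  wordNorm n (fun l => f l - wordMean n f) ^ 2

lemma wordVar_eq_sub [Nonempty V] (n : ℕ) (f : List V → ℝ) :
    wordVar n f = wordNorm n f ^ 2 - wordMean n f ^ 2 := by
  have hexp : ∀ l : List V, (f l - wordMean n f) ^ 2 =
      f l ^ 2 - 2 * wordMean n f * f l + wordMean n f ^ 2 := fun l => by ring
  simp only [wordVar, wordNorm_sq, hexp]
  rw [wordMean_add, wordMean_sub, wordMean_const_mul, wordMean_const]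
  ring

lemma wordNorm_sub_wordMean_le [Nonempty V] (n : ℕ) (f : List V → ℝ) :
    wordNorm n (fun l => f l - wordMean n f) ≤ wordNorm n f := by
  refine (sq_le_sq₀ (apply_nonneg _ _) (apply_nonneg _ _)).1 ?_
  have hvar := wordVar_eq_sub n f
  rw [wordVar] at hvar
  linarith [sq_nonneg (wordMean n f)]

lemma wordVar_append [Nonempty V] (m n : ℕ) (f : List V → ℝ) :
    wordVar (m + n) f = wordMean m (fun u => wordVar n fun v => f (u ++ v)) +
      wordVar m fun u => wordMean n fun v => f (u ++ v) := by
  simp only [wordVar_eq_sub, wordMean_sub, wordNorm_sq]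
  rw [wordMean_append m n f, wordMean_append m n fun l => f l ^ 2]
  ring

lemma div_le_wordVar_of_one_le_sub {n : ℕ} {f : List V → ℝ} {w₁ w₂ : List V}
    (h₁ : w₁.length = n) (h₂ : w₂.length = n) (hf : 1 ≤ f w₁ - f w₂) :
    1 / 4 / (Fintype.card V : ℝ) ^ n ≤ wordVar n f := by
  have key (w : List V) (hw : w.length = n) (hfar : 1 / 2 ≤ |f w - wordMean n f|) :
      1 / 4 / (Fintype.card V : ℝ) ^ n ≤ wordVar n f := by
    subst hw
    rw [wordVar, wordNorm_sq]
    refine le_trans ?_ (div_le_wordMean (fun l => sq_nonneg (f l - wordMean w.length f)) w)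
    gcongr
    rw [← sq_abs]
    nlinarith
  obtain h | h := le_total (1 / 2) |f w₁ - wordMean n f|
  · exact key w₁ h₁ h
  · refine key w₂ h₂ ?_
    rw [abs_le] at h
    rw [abs_sub_comm]
    exact (by linarith : 1 / 2 ≤ wordMean n f - f w₂).trans (le_abs_self _)

end WordMean

section AlmostAdditive

variable {V : Type*}

/-- `blockSum F m k l` is the sum of the values of `F` at the first `k` consecutive blocks of `l` of
length `m`. -/
noncomputable def blockSum (F : List V → ℝ) (m : ℕ) : ℕ → List V → ℝ
  | 0, _ => 0
  | k + 1, l => F (l.take m) + blockSum F m k (l.drop m)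

lemma blockSum_add (F : List V → ℝ) (m j k : ℕ) (l : List V) :
    blockSum F m (j + k) l = blockSum F m j (l.take (j * m)) + blockSum F m k (l.drop (j * m)) := by
  induction j generalizing l with
  | zero => simp [blockSum]
  | succ j ih =>
    rw [Nat.succ_add, blockSum, ih, blockSum, List.take_take, List.drop_take, List.drop_drop,
      add_assoc, Nat.succ_mul]
    simp [add_comm m]

variable [Fintype V]

/-- A function of words is almost additive if its additivity defect under concatenation of random
words is bounded in `L²`, uniformly in the lengths of the words. -/
def IsAlmostAdditive (F : List V → ℝ) (C : ℝ) : Prop :=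
  ∀ m n, wordNorm (m + n) (fun l => F (l.take m) + F (l.drop m) - F l) ≤ C

/-- The deviation of `F` from its mean over the words of the same length. -/
noncomputable def centered (F : List V → ℝ) (l : List V) : ℝ := F l - wordMean l.length F

lemma centered_of_length_eq (F : List V → ℝ) {n : ℕ} {l : List V} (hl : l.length = n) :
    centered F l = F l - wordMean n F := by
  rw [centered, hl]

lemma wordNorm_centered_sq (F : List V → ℝ) (n : ℕ) : wordNorm n (centered F) ^ 2 = wordVar n F :=
  congrArg (· ^ 2) (wordNorm_congr fun _ => centered_of_length_eq F)

lemma IsAlmostAdditive.nonneg {F : List V → ℝ} {C : ℝ} (hF : IsAlmostAdditive F C) : 0 ≤ C :=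
  (apply_nonneg _ _).trans (hF 0 0)

variable [Nonempty V]

lemma wordMean_centered (F : List V → ℝ) (n : ℕ) : wordMean n (centered F) = 0 := by
  rw [wordMean_congr fun _ => centered_of_length_eq F, wordMean_sub, wordMean_const, sub_self]

lemma wordMean_defect (F : List V → ℝ) (m n : ℕ) :
    wordMean (m + n) (fun l => F (l.take m) + F (l.drop m) - F l) =
      wordMean m F + wordMean n F - wordMean (m + n) F := by
  rw [wordMean_sub, wordMean_add, wordMean_take, wordMean_drop]

lemma IsAlmostAdditive.abs_wordMean_le {F : List V → ℝ} {C : ℝ} (hF : IsAlmostAdditive F C)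
    (m n : ℕ) : |wordMean m F + wordMean n F - wordMean (m + n) F| ≤ C := by
  rw [← wordMean_defect]
  exact (abs_wordMean_le_wordNorm _ _).trans (hF m n)

lemma IsAlmostAdditive.centered {F : List V → ℝ} {C : ℝ} (hF : IsAlmostAdditive F C) :
    IsAlmostAdditive (centered F) C := by
  intro m n
  refine le_trans (le_of_eq ?_) ((wordNorm_sub_wordMean_le _ _).trans (hF m n))
  refine wordNorm_congr fun l hl => ?_
  rw [wordMean_defect, centered_of_length_eq F hl,
    centered_of_length_eq F (show (l.take m).length = m by simp [hl]),
    centered_of_length_eq F (show (l.drop m).length = n by simp [hl])]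
  ring

lemma wordNorm_blockSum_sq {F : List V → ℝ} {m : ℕ} (hF : wordMean m F = 0) (k : ℕ) :
    wordNorm (k * m) (blockSum F m k) ^ 2 = k * wordNorm m F ^ 2 := by
  induction k with
  | zero => simp [wordNorm_sq, blockSum, wordMean_const]
  | succ k ih =>
    rw [Nat.succ_mul, add_comm]
    refine (wordNorm_take_add_drop_sq m (k * m) (blockSum F m k) hF).trans ?_
    rw [ih]
    push_cast
    ring

lemma wordNorm_blockSum {F : List V → ℝ} {m : ℕ} (hF : wordMean m F = 0) (k : ℕ) :
    wordNorm (k * m) (blockSum F m k) = √k * wordNorm m F := by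
  rw [← Real.sqrt_sq (apply_nonneg (wordNorm (k * m)) (blockSum F m k)), wordNorm_blockSum_sq hF,
    Real.sqrt_mul (Nat.cast_nonneg k), Real.sqrt_sq (apply_nonneg _ _)]

lemma wordMean_blockSum {F : List V → ℝ} {m : ℕ} (hF : wordMean m F = 0) (k : ℕ) :
    wordMean (k * m) (blockSum F m k) = 0 := by
  induction k with
  | zero => exact wordMean_const _ 0
  | succ k ih =>
    rw [Nat.succ_mul, add_comm]
    simp only [blockSum]
    rw [wordMean_add, wordMean_take, wordMean_drop, hF, ih, add_zero]

lemma wordNorm_blockSum_sub_add_le {F : List V → ℝ} {C : ℝ} (hF : IsAlmostAdditive F C)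
    (h0 : ∀ n, wordMean n F = 0) (m j k : ℕ) :
    wordNorm ((j + k) * m) (blockSum F m (j + k) - F) ≤
      √(wordNorm (j * m) (blockSum F m j - F) ^ 2 + wordNorm (k * m) (blockSum F m k - F) ^ 2) +
        C := by
  have hmean (i : ℕ) : wordMean (i * m) (blockSum F m i - F) = 0 := by
    refine (wordMean_sub _ _ _).trans ?_
    rw [wordMean_blockSum (h0 m), h0, sub_zero]
  have hsplit : blockSum F m (j + k) - F =
      (fun l => (blockSum F m j - F) (l.take (j * m)) + (blockSum F m k - F) (l.drop (j * m))) +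
        fun l => F (l.take (j * m)) + F (l.drop (j * m)) - F l := by
    funext l
    simp only [Pi.sub_apply, Pi.add_apply, blockSum_add]
    ring
  rw [hsplit, Nat.add_mul, ← wordNorm_take_add_drop_sq _ _ _ (hmean j),
    Real.sqrt_sq (apply_nonneg _ _)]
  exact (map_add_le_add _ _ _).trans (add_le_add_right (hF _ _) _)

-- Induction on the binary expansion of `k`: a digit turns `D` into at most `√2 * D + 2 * C`, and
-- the constant `5` satisfies `5 * (√2 - 1) ≥ 2`.
lemma le_mul_sqrt_sub_one_of_le_sqrt_add {D : ℕ → ℝ} {C : ℝ} (hC : 0 ≤ C) (hD : ∀ k, 0 ≤ D k)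
    (h1 : D 1 = 0) (hadd : ∀ j k, D (j + k) ≤ √(D j ^ 2 + D k ^ 2) + C) {k : ℕ} (hk : 1 ≤ k) :
    D k ≤ 5 * C * (√k - 1) := by
  have h2 : (7 / 5 : ℝ) ≤ √2 := Real.le_sqrt_of_sq_le (by norm_num)
  have hdouble (j : ℕ) : D (j + j) ≤ √2 * D j + C := by
    have hj := hadd j j
    rwa [← two_mul (D j ^ 2), Real.sqrt_mul zero_le_two, Real.sqrt_sq (hD j)] at hj
  have hsucc (j : ℕ) : D (j + 1) ≤ D j + C := by
    have hj := hadd j 1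
    rwa [h1, zero_pow two_ne_zero, add_zero, Real.sqrt_sq (hD j)] at hj
  have hstep (j : ℕ) (ih : D j ≤ 5 * C * (√j - 1)) :
      √2 * D j + 2 * C ≤ 5 * C * (√((j + j : ℕ) : ℝ) - 1) := by
    rw [Nat.cast_add, ← two_mul (j : ℝ), Real.sqrt_mul zero_le_two]
    nlinarith [mul_le_mul_of_nonneg_left ih (Real.sqrt_nonneg 2)]
  induction k using Nat.strong_induction_on with
  | h k ih =>
    obtain rfl | hk1 := hk.eq_or_lt
    · simp [h1]
    · obtain ⟨j, rfl | rfl⟩ := Nat.even_or_odd' k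
      · rw [two_mul]
        linarith [hdouble j, hstep j (ih j (by omega) (by omega))]
      · rw [two_mul]
        have hmono : √((j + j : ℕ) : ℝ) ≤ √((j + j + 1 : ℕ) : ℝ) :=
          Real.sqrt_le_sqrt (by push_cast; linarith)
        have := mul_le_mul_of_nonneg_left hmono (by positivity : 0 ≤ 5 * C)
        linarith [hsucc (j + j), hdouble j, hstep j (ih j (by omega) (by omega))]

lemma wordNorm_blockSum_sub_le {F : List V → ℝ} {C : ℝ} (hF : IsAlmostAdditive F C)
    (h0 : ∀ n, wordMean n F = 0) (m : ℕ) {k : ℕ} (hk : 1 ≤ k) :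
    wordNorm (k * m) (blockSum F m k - F) ≤ 5 * C * √k := by
  have h1 : wordNorm (1 * m) (blockSum F m 1 - F) = 0 := by
    rw [one_mul]
    refine (wordNorm_congr fun l hl => ?_).trans (map_zero (wordNorm (V := V) m))
    simp [blockSum, List.take_of_length_le hl.le]
  have hle := le_mul_sqrt_sub_one_of_le_sqrt_add
    (D := fun k => wordNorm (k * m) (blockSum F m k - F)) hF.nonneg
    (fun k => apply_nonneg _ _) h1 (wordNorm_blockSum_sub_add_le hF h0 m) hk
  linarith [hF.nonneg]

end AlmostAdditive

section CentralLimit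

lemma cauchySeq_of_dist_mul_le {α : Type*} [PseudoMetricSpace α] {u : ℕ → α} {ε : ℕ → ℝ}
    (hε : Tendsto ε atTop (𝓝 0)) (hu : ∀ m k, 0 < m → 0 < k → dist (u (k * m)) (u m) ≤ ε m) :
    CauchySeq u := by
  refine Metric.cauchySeq_iff.2 fun δ hδ => ?_
  obtain ⟨N, hN⟩ := eventually_atTop.1 ((hε.eventually_lt_const (half_pos hδ)).and
    (eventually_gt_atTop 0))
  refine ⟨N, fun m hm n hn => ?_⟩
  obtain ⟨hεm, hm⟩ := hN m hm
  obtain ⟨hεn, hn⟩ := hN n hn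
  calc dist (u m) (u n) ≤ dist (u (n * m)) (u m) + dist (u (m * n)) (u n) := by
        rw [mul_comm m n]
        exact dist_triangle_left _ _ _
    _ < δ := by linarith [hu m n hm hn, hu n m hn hm]

lemma tendsto_of_tendsto_of_dist_le {α : Type*} [PseudoMetricSpace α] {φ : ℕ → α}
    {ψ : ℕ → ℕ → α} {a : ℕ → α} {L : α} {ε : ℕ → ℝ} {δ : ℕ → ℕ → ℝ}
    (hψ : ∀ m, 0 < m → Tendsto (ψ m) atTop (𝓝 (a m))) (ha : Tendsto a atTop (𝓝 L))
    (hδ : ∀ m, 0 < m → Tendsto (δ m) atTop (𝓝 0)) (hε : Tendsto ε atTop (𝓝 0))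
    (h : ∀ m, 0 < m → ∀ᶠ n in atTop, dist (φ n) (ψ m n) ≤ ε m + δ m n) :
    Tendsto φ atTop (𝓝 L) := by
  refine Metric.tendsto_nhds.2 fun r hr => ?_
  have hr4 : 0 < r / 4 := by positivity
  obtain ⟨m, ham, hεm, hm⟩ := ((Metric.tendsto_nhds.1 ha _ hr4).and
    ((hε.eventually_lt_const hr4).and (eventually_gt_atTop 0))).exists
  filter_upwards [h m hm, (hδ m hm).eventually_lt_const hr4, Metric.tendsto_nhds.1 (hψ m hm) _ hr4]
    with n hn hδn hψn
  linarith [dist_triangle4 (φ n) (ψ m n) (a m) L]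

lemma one_sub_sqrt_div_sqrt_le {a b : ℝ} (ha : 0 ≤ a) (hb : 0 < b) (hab : a ≤ b) :
    1 - √a / √b ≤ (b - a) / b := by
  rw [← Real.sqrt_div ha, sub_div, div_self hb.ne']
  have hle : a / b ≤ 1 := div_le_one_of_le₀ hab hb.le
  gcongr
  exact Real.le_sqrt_self_iff.2 hle

open ProbabilityTheory in
lemma tendsto_charFun_inv_sqrt_mul_pow_of_variance {Ω : Type*} [MeasurableSpace Ω] {P : Measure Ω}
    [IsProbabilityMeasure P] {X : Ω → ℝ} (hX : MemLp X 2 P) (h0 : ∫ ω, X ω ∂P = 0) (t : ℝ) :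
    Tendsto (fun n : ℕ => charFun (P.map X) ((√n)⁻¹ * t) ^ n) atTop
      (𝓝 (Complex.exp (-((∫ ω, X ω ^ 2 ∂P) * t ^ 2) / 2 : ℝ))) := by
  have hsq : 0 ≤ᵐ[P] fun ω => X ω ^ 2 := ae_of_all P fun ω => sq_nonneg (X ω)
  obtain hv | hv := (integral_nonneg_of_ae hsq).eq_or_lt
  · have hX0 : X =ᵐ[P] fun _ => 0 := by
      filter_upwards [(integral_eq_zero_iff_of_nonneg_ae hsq hX.integrable_sq).1 hv.symm] with ω hω
      exact pow_eq_zero_iff two_ne_zero |>.1 hω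
    have hchar (s : ℝ) : charFun (P.map X) s = 1 := by
      rw [Measure.map_congr hX0]
      simp
    simp [hchar, ← hv]
  · set v := ∫ ω, X ω ^ 2 ∂P
    have hlim := tendsto_charFun_inv_sqrt_mul_pow (X := fun ω => (√v)⁻¹ * X ω)
      (hX.aemeasurable.const_mul _) (by rw [integral_const_mul, h0, mul_zero])
      (by
        simp only [Pi.pow_def, mul_pow, integral_const_mul, inv_pow, Real.sq_sqrt hv.le]
        exact inv_mul_cancel₀ hv.ne') (√v * t)
    convert! hlim using 3 with n
    · rw [charFun_map_mul_comp hX.aemeasurable, mul_left_comm (√n)⁻¹,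
        inv_mul_cancel_left₀ (Real.sqrt_pos.2 hv).ne']
    · rw [Complex.ofReal_mul, mul_pow, ← Complex.ofReal_pow √v, Real.sq_sqrt hv.le]
      push_cast
      rfl

end CentralLimit

section WordCharFun

variable {V : Type*} [Fintype V]

/-- The characteristic function of the law of `f` at a uniformly random word of length `n`. -/
noncomputable def wordCharFun (n : ℕ) (f : List V → ℝ) (t : ℝ) : ℂ :=
  wordMean n fun l => Complex.exp (t * f l * Complex.I)

lemma wordCharFun_const_mul (n : ℕ) (c : ℝ) (f : List V → ℝ) (t : ℝ) :
    wordCharFun n (fun l => c * f l) t = wordCharFun n f (c * t) := by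
  refine wordMean_congr fun l _ => ?_
  push_cast
  ring_nf

variable [Nonempty V]

lemma wordCharFun_take (m n : ℕ) (f : List V → ℝ) (t : ℝ) :
    wordCharFun (m + n) (fun l => f (l.take m)) t = wordCharFun m f t :=
  wordMean_take m n fun l => Complex.exp (t * f l * Complex.I)

lemma wordCharFun_blockSum (F : List V → ℝ) (m k : ℕ) (t : ℝ) :
    wordCharFun (k * m) (blockSum F m k) t = wordCharFun m F t ^ k := by
  induction k with
  | zero => simp [wordCharFun, blockSum, wordMean_const]
  | succ k ih =>
    rw [Nat.succ_mul, add_comm (k * m), pow_succ', ← ih]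
    refine Eq.trans (wordMean_congr fun l _ => ?_) (wordMean_take_mul_drop m (k * m) _ _)
    rw [blockSum, ← Complex.exp_add]
    push_cast
    ring_nf

lemma norm_wordCharFun_sub_le (n : ℕ) (f g : List V → ℝ) (t : ℝ) :
    ‖wordCharFun n f t - wordCharFun n g t‖ ≤ |t| * wordNorm n (f - g) := by
  have hexp (x y : ℝ) :
      ‖Complex.exp (t * x * Complex.I) - Complex.exp (t * y * Complex.I)‖ ≤ |t| * |x - y| := by
    calc ‖Complex.exp (t * x * Complex.I) - Complex.exp (t * y * Complex.I)‖
        = ‖Complex.exp ((t * y : ℝ) * Complex.I) *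
            (Complex.exp (Complex.I * (t * (x - y) : ℝ)) - 1)‖ := by
          rw [mul_sub, ← Complex.exp_add, mul_one]
          push_cast
          ring_nf
      _ ≤ |t| * |x - y| := by
          rw [norm_mul, Complex.norm_exp_ofReal_mul_I, one_mul, ← abs_mul]
          exact Real.norm_exp_I_mul_ofReal_sub_one_le
  calc ‖wordCharFun n f t - wordCharFun n g t‖
      ≤ wordMean n fun l =>
          ‖Complex.exp (t * f l * Complex.I) - Complex.exp (t * g l * Complex.I)‖ := by
        rw [wordCharFun, wordCharFun, ← wordMean_sub]
        exact RCLike.norm_expect_le (K := ℂ)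
    _ ≤ wordMean n fun l => |t| * |f l - g l| := wordMean_mono fun l _ => hexp _ _
    _ ≤ |t| * wordNorm n (f - g) := by
        rw [wordMean_const_mul]
        exact mul_le_mul_of_nonneg_left (wordMean_abs_le_wordNorm n (f - g)) (abs_nonneg t)

end WordCharFun

section UniformIID

variable {V : Type*} [Fintype V] {Ω : Type*} [MeasurableSpace Ω] {μ : Measure Ω} {X : ℕ → Ω → V}

lemma IsUniformIID.measurable_word (hX : IsUniformIID μ X) (n : ℕ) :
    @Measurable Ω (Fin n → V) _ ⊤ fun ω i => X i ω := by
  let _ : MeasurableSpace (Fin n → V) := ⊤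
  refine measurable_to_countable' fun u => ?_
  have hpre : (fun ω (i : Fin n) => X i ω) ⁻¹' {u} = ⋂ i : Fin n, {ω | X i ω = u i} := by
    ext ω
    simp [funext_iff]
  rw [hpre]
  exact MeasurableSet.iInter fun i => hX.1 i (u i)

lemma IsUniformIID.measurable_comp_word (hX : IsUniformIID μ X) (n : ℕ) {E : Type*}
    [MeasurableSpace E] (f : List V → E) :
    Measurable fun ω => f (List.ofFn fun i : Fin n => X i ω) := by
  let _ : MeasurableSpace (Fin n → V) := ⊤
  exact (measurable_from_top (f := fun u : Fin n → V => f (List.ofFn u))).comp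
    (hX.measurable_word n)

lemma IsUniformIID.measure_word_eq [Nonempty V] (hX : IsUniformIID μ X) {n : ℕ} (u : Fin n → V) :
    μ {ω | (fun i : Fin n => X i ω) = u} = (Fintype.card V : ℝ≥0∞)⁻¹ ^ n := by
  rw [← hX.2 n fun k => if hk : k < n then u ⟨k, hk⟩ else Classical.arbitrary V]
  congr with ω
  simp only [funext_iff, Fin.forall_iff]
  exact forall₂_congr fun k hk => by rw [dif_pos hk]

lemma IsUniformIID.integral_eq_wordMean [Nonempty V] [IsProbabilityMeasure μ]
    (hX : IsUniformIID μ X) (n : ℕ) {E : Type*} [NormedAddCommGroup E] [NormedSpace ℝ E]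
    [CompleteSpace E] [Module ℚ≥0 E] (f : List V → E) :
    ∫ ω, f (List.ofFn fun i : Fin n => X i ω) ∂μ = wordMean n f := by
  let _ : MeasurableSpace (Fin n → V) := ⊤
  have : DiscreteMeasurableSpace (Fin n → V) := ⟨fun _ => trivial⟩
  have hword := hX.measurable_word n
  have := Measure.isProbabilityMeasure_map (μ := μ) hword.aemeasurable
  have hlaw (u : Fin n → V) :
      (μ.map fun ω (i : Fin n) => X i ω).real {u} = ((Fintype.card V : ℝ) ^ n)⁻¹ := by
    rw [measureReal_def, Measure.map_apply hword (MeasurableSet.singleton u)]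
    refine (congrArg ENNReal.toReal (hX.measure_word_eq u)).trans ?_
    simp
  calc ∫ ω, f (List.ofFn fun i : Fin n => X i ω) ∂μ
      = ∫ u, f (List.ofFn u) ∂μ.map fun ω (i : Fin n) => X i ω :=
        (integral_map (f := fun u => f (List.ofFn u)) hword.aemeasurable
          StronglyMeasurable.of_discrete.aestronglyMeasurable).symm
    _ = ((Fintype.card V : ℝ) ^ n)⁻¹ • ∑ u : Fin n → V, f (List.ofFn u) := by
        rw [integral_fintype .of_finite, Finset.smul_sum]
        simp only [hlaw]
    _ = wordMean n f := by
        rw [wordMean, Finset.expect, ← NNRat.cast_smul_eq_nnqsmul ℝ]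
        simp

lemma exists_isUniformIID (V : Type*) [Fintype V] [Nonempty V] :
    ∃ (_ : MeasurableSpace (ℕ → V)) (μ : Measure (ℕ → V)),
      IsProbabilityMeasure μ ∧ IsUniformIID μ fun n ω => ω n := by
  let _ : MeasurableSpace V := ⊤
  have : DiscreteMeasurableSpace V := ⟨fun _ => trivial⟩
  let P : Measure V := ProbabilityTheory.uniformOn Set.univ
  have : IsProbabilityMeasure P :=
    inferInstanceAs (IsProbabilityMeasure (ProbabilityTheory.uniformOn Set.univ))
  have hP (v : V) : P {v} = (Fintype.card V : ℝ≥0∞)⁻¹ :=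
    ProbabilityTheory.uniformOn_univ.trans (by simp)
  refine ⟨inferInstance, Measure.infinitePi fun _ => P, inferInstance,
    fun n v => (measurable_pi_apply (X := fun _ => V) n) (MeasurableSet.singleton v),
    fun n f => ?_⟩
  have hcyl : {ω : ℕ → V | ∀ k < n, ω k = f k} =
      Set.pi (Finset.range n : Set ℕ) fun k => {f k} := by
    ext ω
    simp [Set.mem_pi]
  rw [hcyl, Measure.infinitePi_pi _ fun i _ => MeasurableSet.singleton _]
  simp [hP]

variable [Nonempty V] [IsProbabilityMeasure μ]

lemma IsUniformIID.charFun_map_eq_wordCharFun (hX : IsUniformIID μ X) (n : ℕ) (f : List V → ℝ)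
    (t : ℝ) :
    charFun (μ.map fun ω => f (List.ofFn fun i : Fin n => X i ω)) t = wordCharFun n f t := by
  rw [charFun_apply_real, integral_map (hX.measurable_comp_word n f).aemeasurable
    (Continuous.aestronglyMeasurable (by fun_prop))]
  exact hX.integral_eq_wordMean n fun l => Complex.exp (t * f l * Complex.I)

open ProbabilityTheory BoundedContinuousFunction in
lemma IsUniformIID.tendsto_integral_gaussianReal (hX : IsUniformIID μ X) {T : ℕ → List V → ℝ}
    {v : ℝ≥0} (hT : ∀ t : ℝ, Tendsto (fun n => wordCharFun n (T n) t) atTop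
      (𝓝 (Complex.exp (-(v * t ^ 2) / 2 : ℝ)))) (f : ℝ →ᵇ ℝ) :
    Tendsto (fun n => ∫ ω, f (T n (List.ofFn fun i : Fin n => X i ω)) ∂μ) atTop
      (𝓝 (∫ x, f x ∂gaussianReal 0 v)) := by
  have hmeas (n : ℕ) := (hX.measurable_comp_word n (T n)).aemeasurable (μ := μ)
  let law (n : ℕ) : ProbabilityMeasure ℝ := ⟨_, Measure.isProbabilityMeasure_map (hmeas n)⟩
  have hlaw : Tendsto law atTop (𝓝 ⟨gaussianReal 0 v, inferInstance⟩) := by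
    refine ProbabilityMeasure.tendsto_iff_tendsto_charFun.2 fun t => ?_
    convert! hT t using 2
    · exact hX.charFun_map_eq_wordCharFun _ _ t
    · refine (charFun_gaussianReal t).trans ?_
      simp [neg_div]
  refine (ProbabilityMeasure.tendsto_iff_forall_integral_tendsto.1 hlaw f).congr fun n => ?_
  exact integral_map (hmeas n) f.continuous.aestronglyMeasurable

end UniformIID

section AlmostAdditiveCLT

variable {V : Type*} [Fintype V] [Nonempty V] {F : List V → ℝ} {C : ℝ}

lemma wordNorm_blockSum_mul_sub_le (hF : IsAlmostAdditive F C) (h0 : ∀ n, wordMean n F = 0)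
    (m : ℕ) {k : ℕ} (hk : 1 ≤ k) :
    |√k * wordNorm m F - wordNorm (k * m) F| ≤ 5 * C * √k := by
  rw [← wordNorm_blockSum (h0 m)]
  exact (abs_sub_map_le_sub _ _ _).trans (wordNorm_blockSum_sub_le hF h0 m hk)

lemma IsAlmostAdditive.exists_tendsto_wordNorm_sq_div (hF : IsAlmostAdditive F C)
    (h0 : ∀ n, wordMean n F = 0) :
    ∃ σ2 : ℝ≥0, Tendsto (fun n : ℕ => wordNorm n F ^ 2 / n) atTop (𝓝 σ2) := by
  have hε : Tendsto (fun m : ℕ => 5 * C / √m) atTop (𝓝 0) :=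
    (Real.tendsto_sqrt_atTop.comp tendsto_natCast_atTop_atTop).const_div_atTop _
  obtain ⟨σ, hσ⟩ := cauchySeq_tendsto_of_complete (cauchySeq_of_dist_mul_le
    (u := fun n : ℕ => wordNorm n F / √n) hε fun m k hm hk => by
      have hk' : 0 < √(k : ℝ) := Real.sqrt_pos.2 (Nat.cast_pos.2 hk)
      have hm' : 0 < √(m : ℝ) := Real.sqrt_pos.2 (Nat.cast_pos.2 hm)
      calc dist (wordNorm (k * m) F / √(k * m : ℕ)) (wordNorm m F / √m)
          = |√k * wordNorm m F - wordNorm (k * m) F| / (√k * √m) := by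
            rw [Nat.cast_mul, Real.sqrt_mul (Nat.cast_nonneg k), dist_comm, Real.dist_eq,
              ← mul_div_mul_left _ _ hk'.ne', ← sub_div, abs_div, abs_of_pos (mul_pos hk' hm')]
        _ ≤ 5 * C * √k / (√k * √m) := by
            gcongr
            exact wordNorm_blockSum_mul_sub_le hF h0 m hk
        _ = 5 * C / √m := by field_simp)
  refine ⟨⟨σ ^ 2, sq_nonneg σ⟩, (hσ.pow 2).congr fun n => ?_⟩
  rw [div_pow, Real.sq_sqrt (Nat.cast_nonneg n)]

lemma tendsto_wordCharFun_inv_sqrt_mul_pow {m : ℕ} (h0 : wordMean m F = 0) (t : ℝ) :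
    Tendsto (fun k : ℕ => wordCharFun m F ((√k)⁻¹ * t) ^ k) atTop
      (𝓝 (Complex.exp (-(wordNorm m F ^ 2 * t ^ 2) / 2 : ℝ))) := by
  obtain ⟨_, μ, _, hX⟩ := exists_isUniformIID V
  have hmeas := (hX.measurable_comp_word m F).aestronglyMeasurable (μ := μ)
  obtain ⟨K, hK⟩ :=
    (Set.finite_range fun u : Fin m → V => F (List.ofFn u)).isBounded.exists_norm_le
  have hmem : MemLp (fun ω : ℕ → V => F (List.ofFn fun i : Fin m => ω i)) 2 μ :=
    MemLp.of_bound hmeas K (ae_of_all μ fun ω => hK _ (Set.mem_range_self _))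
  have hlim := tendsto_charFun_inv_sqrt_mul_pow_of_variance hmem
    ((hX.integral_eq_wordMean m F).trans h0) t
  simp only [hX.charFun_map_eq_wordCharFun] at hlim
  rw [hX.integral_eq_wordMean m fun l => F l ^ 2, ← wordNorm_sq] at hlim
  exact hlim

lemma IsAlmostAdditive.wordNorm_sub_take_le (hF : IsAlmostAdditive F C) (m r : ℕ) :
    wordNorm (m + r) (fun l => F l - F (l.take m)) ≤ wordNorm r F + C := by
  have hsplit : (fun l => F l - F (l.take m)) =
      (fun l => F (l.drop m)) - fun l => F (l.take m) + F (l.drop m) - F l := by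
    funext l
    simp only [Pi.sub_apply]
    ring
  rw [hsplit, ← wordNorm_drop m r F]
  exact (map_sub_le_add _ _ _).trans (add_le_add_right (hF m r) _)

lemma IsAlmostAdditive.wordNorm_sub_blockSum_take_le (hF : IsAlmostAdditive F C)
    (h0 : ∀ n, wordMean n F = 0) (m r : ℕ) {k : ℕ} (hk : 1 ≤ k) :
    wordNorm (k * m + r) (fun l => F l - blockSum F m k (l.take (k * m))) ≤
      wordNorm r F + C + 5 * C * √k := by
  have hsplit : (fun l => F l - blockSum F m k (l.take (k * m))) =
      (fun l => F l - F (l.take (k * m))) - fun l => (blockSum F m k - F) (l.take (k * m)) := by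
    funext l
    simp only [Pi.sub_apply]
    ring
  rw [hsplit]
  refine (map_sub_le_add _ _ _).trans (add_le_add (hF.wordNorm_sub_take_le _ _) ?_)
  rw [wordNorm_take]
  exact wordNorm_blockSum_sub_le hF h0 m hk

lemma IsAlmostAdditive.wordNorm_inv_sqrt_mul_sub_blockSum_le (hF : IsAlmostAdditive F C)
    (h0 : ∀ n, wordMean n F = 0) {m k : ℕ} (hm : 0 < m) (hk : 0 < k) (r : ℕ) :
    wordNorm (k * m + r) ((fun l => (√(k * m + r : ℕ))⁻¹ * F l) -
        fun l => (√(k * m : ℕ))⁻¹ * blockSum F m k (l.take (k * m))) ≤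
      5 * C / √m + ((wordNorm r F + C) / √(k * m + r : ℕ) +
        wordNorm m F / √m * (r / (k * m + r : ℕ))) := by
  have hC := hF.nonneg
  have hk' : 0 < √(k : ℝ) := Real.sqrt_pos.2 (Nat.cast_pos.2 hk)
  have hm' : 0 < √(m : ℝ) := Real.sqrt_pos.2 (Nat.cast_pos.2 hm)
  have hsqrt : √(k * m : ℕ) = √k * √m := by rw [Nat.cast_mul, Real.sqrt_mul (Nat.cast_nonneg k)]
  have hle : √(k * m : ℕ) ≤ √(k * m + r : ℕ) :=
    Real.sqrt_le_sqrt (Nat.cast_le.2 (Nat.le_add_right _ _))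
  have hpos : 0 < √(k * m : ℕ) := hsqrt ▸ mul_pos hk' hm'
  refine (wordNorm_inv_mul_sub_inv_mul_le _ _ _ hpos hle).trans ?_
  rw [wordNorm_take (k * m) r (blockSum F m k), wordNorm_blockSum (h0 m)]
  have hdefect : wordNorm (k * m + r) (fun l => F l - blockSum F m k (l.take (k * m))) /
      √(k * m + r : ℕ) ≤ (wordNorm r F + C) / √(k * m + r : ℕ) + 5 * C / √m := by
    calc _ ≤ (wordNorm r F + C + 5 * C * √k) / √(k * m + r : ℕ) := by
          gcongr
          exact hF.wordNorm_sub_blockSum_take_le h0 m r hk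
      _ ≤ (wordNorm r F + C) / √(k * m + r : ℕ) + 5 * C * √k / √(k * m : ℕ) := by
          rw [add_div]
          gcongr
      _ = _ := by
          rw [hsqrt]
          field_simp
  have hratio : 1 - √(k * m : ℕ) / √(k * m + r : ℕ) ≤ r / (k * m + r : ℕ) := by
    refine (one_sub_sqrt_div_sqrt_le (Nat.cast_nonneg _)
      (Nat.cast_pos.2 (Nat.add_pos_left (Nat.mul_pos hk hm) r))
      (Nat.cast_le.2 (Nat.le_add_right _ r))).trans_eq ?_
    push_cast
    ring
  have hblock : √k * wordNorm m F / √(k * m : ℕ) = wordNorm m F / √m := by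
    rw [hsqrt]
    field_simp
  rw [hblock]
  linarith [mul_le_mul_of_nonneg_left hratio
    (div_nonneg (apply_nonneg (wordNorm (V := V) m) F) hm'.le)]

lemma IsAlmostAdditive.dist_wordCharFun_le (hF : IsAlmostAdditive F C)
    (h0 : ∀ n, wordMean n F = 0) {m k r : ℕ} (hk : 0 < k) (hr : r < m) (t : ℝ) :
    dist (wordCharFun (k * m + r) F ((√(k * m + r : ℕ))⁻¹ * t))
        (wordCharFun m F ((√k)⁻¹ * ((√m)⁻¹ * t)) ^ k) ≤
      |t| * (5 * C / √m) + |t| * ((∑ i ∈ Finset.range m, wordNorm i F + C) / √(k * m + r : ℕ) +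
        wordNorm m F / √m * (m / (k * m + r : ℕ))) := by
  have hscale : (√k)⁻¹ * ((√m)⁻¹ * t) = (√(k * m : ℕ))⁻¹ * t := by
    rw [Nat.cast_mul, Real.sqrt_mul (Nat.cast_nonneg k), mul_inv, mul_assoc]
  have hle : wordNorm r F ≤ ∑ i ∈ Finset.range m, wordNorm i F :=
    Finset.single_le_sum (f := fun i => wordNorm i F) (fun i _ => apply_nonneg _ _)
      (Finset.mem_range.2 hr)
  rw [dist_eq_norm, hscale, ← wordCharFun_blockSum, ← wordCharFun_take (k * m) r,
    ← wordCharFun_const_mul, ← wordCharFun_const_mul, ← mul_add]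
  refine (norm_wordCharFun_sub_le _ _ _ _).trans (mul_le_mul_of_nonneg_left ?_ (abs_nonneg t))
  refine (hF.wordNorm_inv_sqrt_mul_sub_blockSum_le h0 (Nat.zero_lt_of_lt hr) hk r).trans ?_
  gcongr

theorem IsAlmostAdditive.tendsto_wordCharFun (hF : IsAlmostAdditive F C)
    (h0 : ∀ n, wordMean n F = 0) {σ2 : ℝ}
    (hσ : Tendsto (fun n : ℕ => wordNorm n F ^ 2 / n) atTop (𝓝 σ2)) (t : ℝ) :
    Tendsto (fun n : ℕ => wordCharFun n F ((√n)⁻¹ * t)) atTop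
      (𝓝 (Complex.exp (-(σ2 * t ^ 2) / 2 : ℝ))) := by
  have hsqrt : Tendsto (fun n : ℕ => √(n : ℝ)) atTop atTop :=
    Real.tendsto_sqrt_atTop.comp tendsto_natCast_atTop_atTop
  have hε : Tendsto (fun m : ℕ => |t| * (5 * C / √m)) atTop (𝓝 0) := by
    simpa using (hsqrt.const_div_atTop (5 * C)).const_mul |t|
  have hδ (m : ℕ) :
      Tendsto (fun n : ℕ => |t| * ((∑ r ∈ Finset.range m, wordNorm r F + C) / √n +
        wordNorm m F / √m * (m / n))) atTop (𝓝 0) := by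
    simpa using ((hsqrt.const_div_atTop (∑ r ∈ Finset.range m, wordNorm r F + C)).add
      ((tendsto_natCast_atTop_atTop.const_div_atTop (m : ℝ)).const_mul
        (wordNorm m F / √m))).const_mul |t|
  have hblock (m : ℕ) (hm : 0 < m) :=
    (tendsto_wordCharFun_inv_sqrt_mul_pow (h0 m) ((√m)⁻¹ * t)).comp
      (Nat.tendsto_div_const_atTop hm.ne')
  refine tendsto_of_tendsto_of_dist_le hblock ?_ (fun m _ => hδ m) hε fun m hm => ?_
  · refine ((Complex.continuous_exp.comp Complex.continuous_ofReal).tendsto _).comp ?_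
    refine Tendsto.div_const (Tendsto.neg ((hσ.mul_const (t ^ 2)).congr fun m => ?_)) 2
    rw [mul_pow, inv_pow, Real.sq_sqrt (Nat.cast_nonneg m), div_eq_mul_inv, mul_assoc]
  · filter_upwards [eventually_ge_atTop m] with n hmn
    have hdist := hF.dist_wordCharFun_le h0 (Nat.div_pos hmn hm) (Nat.mod_lt n hm) t
    rwa [Nat.div_add_mod'] at hdist

end AlmostAdditiveCLT

section AlmostAdditiveMean

lemma mul_le_add_of_le_add_of_tendsto_div {a : ℕ → ℝ} {C α : ℝ}
    (ha : ∀ m n, a (m + n) ≤ a m + a n + C)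
    (hα : Tendsto (fun n : ℕ => a n / n) atTop (𝓝 α)) (n : ℕ) : n * α ≤ a n + C := by
  have hsub : Subadditive fun n => a n + C := fun m n => by linarith [ha m n]
  have hlim : Tendsto (fun n : ℕ => (a n + C) / n) atTop (𝓝 α) := by
    simpa only [add_div, add_zero] using
      hα.add (tendsto_natCast_atTop_atTop.const_div_atTop C)
  obtain rfl | hn := eq_or_ne n 0
  · have h0 := ha 0 0
    rw [Nat.cast_zero, zero_mul]
    linarith
  · have hbdd := hlim.bddBelow_range
    have hle := hsub.lim_le_div hbdd hn
    rw [tendsto_nhds_unique (hsub.tendsto_lim hbdd) hlim, le_div_iff₀ (by positivity)] at hle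
    rwa [mul_comm]

variable {V : Type*} [Fintype V] [Nonempty V] {F : List V → ℝ} {C : ℝ}

lemma IsAlmostAdditive.abs_wordMean_sub_mul_le (hF : IsAlmostAdditive F C) {α : ℝ}
    (hα : Tendsto (fun n : ℕ => wordMean n F / n) atTop (𝓝 α)) (n : ℕ) :
    |wordMean n F - n * α| ≤ C := by
  have hmean (m n : ℕ) := abs_le.1 (hF.abs_wordMean_le m n)
  have hlower := mul_le_add_of_le_add_of_tendsto_div (a := fun n => wordMean n F)
    (fun m n => by linarith [(hmean m n).1]) hα n
  have hupper := mul_le_add_of_le_add_of_tendsto_div (a := fun n => -wordMean n F) (α := -α)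
    (fun m n => by linarith [(hmean m n).2]) (by simpa only [neg_div] using hα.neg) n
  rw [abs_le]
  constructor <;> linarith

lemma IsAlmostAdditive.exists_tendsto_wordVar_div (hF : IsAlmostAdditive F C) :
    ∃ σ2 : ℝ≥0, Tendsto (fun n : ℕ => wordVar n F / n) atTop (𝓝 σ2) := by
  simpa only [wordNorm_centered_sq] using
    hF.centered.exists_tendsto_wordNorm_sq_div (wordMean_centered F)

lemma tendsto_wordCharFun_of_wordNorm_sub_le {T : ℕ → List V → ℝ} {K t : ℝ} {L : ℂ}
    (hT : ∀ n, wordNorm n (T n - F) ≤ K)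
    (hF : Tendsto (fun n : ℕ => wordCharFun n F ((√n)⁻¹ * t)) atTop (𝓝 L)) :
    Tendsto (fun n : ℕ => wordCharFun n (T n) ((√n)⁻¹ * t)) atTop (𝓝 L) := by
  refine hF.congr_dist (squeeze_zero (fun _ => dist_nonneg) (fun n => ?_)
    (by simpa using ((Real.tendsto_sqrt_atTop.comp
      tendsto_natCast_atTop_atTop).inv_tendsto_atTop.mul_const (|t| * K))))
  rw [dist_comm, dist_eq_norm]
  calc ‖wordCharFun n (T n) ((√n)⁻¹ * t) - wordCharFun n F ((√n)⁻¹ * t)‖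
      ≤ |(√n)⁻¹ * t| * wordNorm n (T n - F) := norm_wordCharFun_sub_le _ _ _ _
    _ = (√n)⁻¹ * (|t| * wordNorm n (T n - F)) := by
      rw [abs_mul, abs_of_nonneg (inv_nonneg.2 (Real.sqrt_nonneg _)), mul_assoc]
    _ ≤ (√n)⁻¹ * (|t| * K) := by
      gcongr
      exact hT n

open ProbabilityTheory BoundedContinuousFunction in
theorem IsUniformIID.tendsto_integral_of_isAlmostAdditive {Ω : Type*} [MeasurableSpace Ω]
    {μ : Measure Ω} [IsProbabilityMeasure μ] {X : ℕ → Ω → V} (hX : IsUniformIID μ X)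
    (hF : IsAlmostAdditive F C) {α K : ℝ} {σ2 : ℝ≥0} {T : List V → ℝ}
    (hα : Tendsto (fun n : ℕ => wordMean n F / n) atTop (𝓝 α))
    (hσ : Tendsto (fun n : ℕ => wordVar n F / n) atTop (𝓝 σ2))
    (hT : ∀ n, wordNorm n (T - F) ≤ K) (f : ℝ →ᵇ ℝ) :
    Tendsto (fun n : ℕ =>
        ∫ ω, f ((T (List.ofFn fun i : Fin n => X i ω) - n * α) / √n) ∂μ) atTop
      (𝓝 (∫ x, f x ∂gaussianReal 0 σ2)) := by
  have hdist (n : ℕ) : wordNorm n ((fun l => T l - n * α) - centered F) ≤ K + C := by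
    calc wordNorm n ((fun l => T l - n * α) - centered F)
        = wordNorm n ((T - F) + fun _ => wordMean n F - n * α) :=
          wordNorm_congr fun l hl => by
            simp only [Pi.add_apply, Pi.sub_apply, centered_of_length_eq F hl]
            ring
      _ ≤ wordNorm n (T - F) + |wordMean n F - n * α| :=
          (map_add_le_add _ _ _).trans_eq (by rw [wordNorm_const])
      _ ≤ K + C := add_le_add (hT n) (hF.abs_wordMean_sub_mul_le hα n)
  simp only [← wordNorm_centered_sq] at hσ
  simp only [div_eq_inv_mul]
  refine hX.tendsto_integral_gaussianReal (fun t => ?_) f (T := fun n l => (√n)⁻¹ * (T l - n * α))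
  simp only [wordCharFun_const_mul]
  exact tendsto_wordCharFun_of_wordNorm_sub_le hdist
    (hF.centered.tendsto_wordCharFun (wordMean_centered F) hσ t)

end AlmostAdditiveMean

lemma le_div_one_sub_of_le_add_mul {a : ℕ → ℝ} {L ρ : ℝ} {q : ℕ} (hL : 0 ≤ L) (hρ0 : 0 ≤ ρ)
    (hρ1 : ρ < 1) (hinit : ∀ n < q, a n ≤ L) (hstep : ∀ n, a (n + q) ≤ L + ρ * a n) (n : ℕ) :
    a n ≤ L / (1 - ρ) := by
  have hρ : 0 < 1 - ρ := sub_pos.2 hρ1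
  have hfix : L + ρ * (L / (1 - ρ)) = L / (1 - ρ) := by
    field_simp
    ring
  induction n using Nat.strong_induction_on with
  | h n ih =>
    obtain hn | hn := lt_or_ge n q
    · exact (hinit n hn).trans (le_div_self hL hρ (by linarith))
    · obtain rfl | hq := q.eq_zero_or_pos
      · have hn0 := hstep n
        rw [add_zero] at hn0
        rw [le_div_iff₀ hρ]
        linarith
      · obtain ⟨m, rfl⟩ := Nat.exists_eq_add_of_le' hn
        calc a (m + q) ≤ L + ρ * a m := hstep m
          _ ≤ L + ρ * (L / (1 - ρ)) := by
            gcongr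
            exact ih m (by omega)
          _ = L / (1 - ρ) := hfix

lemma nonempty_iso_top_iff {V : Type*} {G : SimpleGraph V} :
    Nonempty (G ≃g (⊤ : SimpleGraph V)) ↔ G = ⊤ := by
  refine ⟨fun ⟨e⟩ => ?_, fun h => h ▸ ⟨SimpleGraph.Iso.refl⟩⟩
  ext x y
  rw [← e.map_adj_iff, SimpleGraph.top_adj, SimpleGraph.top_adj, e.injective.ne_iff]

section RandomDeposition

variable {V : Type*} [Fintype V] {G : SimpleGraph V}

/-- The largest height, as a real number, after deposition of a word on the flat surface. -/
noncomputable def flatMaxHeight (G : SimpleGraph V) (l : List V) : ℝ := maxHeight (deposits G 0 l)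

lemma flatMaxHeight_le_length (l : List V) : flatMaxHeight G l ≤ l.length := by
  have hle := maxHeight_deposits_le G 0 l
  rw [maxHeight_zero, zero_add] at hle
  exact Nat.cast_le.2 hle

variable [Nonempty V]

lemma abs_flatMaxHeight_add_sub_le (l l' : List V) :
    |flatMaxHeight G l + flatMaxHeight G l' - flatMaxHeight G (l ++ l')| ≤
      heightSpread (deposits G 0 l) := by
  have hspread := minHeight_add_heightSpread (deposits G 0 l)
  have hupper := maxHeight_deposits_le_add G (deposits G 0 l) l'
  have hlower := add_le_maxHeight_deposits G (deposits G 0 l) l'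
  simp only [flatMaxHeight, deposits_append]
  rw [abs_le]
  constructor <;> rify at * <;> linarith

lemma wordNorm_indicator_ne_lt_one (W : List V) :
    wordNorm W.length (fun l => if l = W then 0 else 1) < 1 := by
  have hW := div_le_wordMean (f := fun l => if l = W then 1 else 0)
    (fun l => by split_ifs <;> norm_num) W
  have hpos : 0 < 1 / (Fintype.card V : ℝ) ^ W.length := by positivity
  rw [if_pos rfl] at hW
  refine (sq_lt_one_iff₀ (apply_nonneg _ _)).1 ?_
  calc wordNorm W.length (fun l => if l = W then 0 else 1) ^ 2
      = wordMean W.length fun l => 1 - if l = W then 1 else 0 := by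
        rw [wordNorm_sq]
        exact wordMean_congr fun l _ => by split_ifs <;> norm_num
    _ < 1 := by
        rw [wordMean_sub, wordMean_const]
        linarith

lemma IsRenewalWord.wordNorm_heightSpread_add_le {W : List V} (hW : IsRenewalWord G W) (n : ℕ) :
    wordNorm (n + W.length) (fun l => (heightSpread (deposits G 0 l) : ℝ)) ≤
      W.length + wordNorm W.length (fun l => if l = W then 0 else 1) *
        wordNorm n fun l => (heightSpread (deposits G 0 l) : ℝ) := by
  set q := W.length
  set spread : List V → ℝ := fun l => heightSpread (deposits G 0 l)
  set miss : List V → ℝ := fun l => if l = W then 0 else 1 with hmiss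
  have hpoint (l : List V) (hl : l.length = n + q) :
      spread l ≤ q + spread (l.take n) * miss (l.drop n) := by
    have happend := deposits_append G 0 (l.take n) (l.drop n)
    rw [List.take_append_drop] at happend
    by_cases hdrop : l.drop n = W
    · have hle := hW.heightSpread_deposits_le_length (deposits G 0 (l.take n))
      simp only [spread, hmiss, happend, if_pos hdrop, mul_zero, add_zero]
      rw [hdrop]
      exact_mod_cast hle
    · have hle := heightSpread_deposits_le G (deposits G 0 (l.take n)) (l.drop n)
      rw [List.length_drop, hl, Nat.add_sub_cancel_left, add_comm] at hle
      simp only [spread, hmiss, happend, if_neg hdrop, mul_one]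
      exact_mod_cast hle
  calc wordNorm (n + q) spread
      ≤ wordNorm (n + q) ((fun _ => (q : ℝ)) + fun l => spread (l.take n) * miss (l.drop n)) :=
        wordNorm_mono fun l hl => by
          rw [abs_of_nonneg (Nat.cast_nonneg _)]
          exact (hpoint l hl).trans (le_abs_self _)
    _ ≤ q + wordNorm n spread * wordNorm q miss := by
        refine (map_add_le_add _ _ _).trans_eq ?_
        rw [wordNorm_const, wordNorm_take_mul_drop, Nat.abs_cast]
    _ = q + wordNorm q miss * wordNorm n spread := by rw [mul_comm (wordNorm n spread)]

lemma exists_wordNorm_heightSpread_le (hG : G.Connected) :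
    ∃ C : ℝ, ∀ n, wordNorm n (fun l => (heightSpread (deposits G 0 l) : ℝ)) ≤ C := by
  obtain ⟨W, hW⟩ := exists_isRenewalWord hG
  refine ⟨_, le_div_one_sub_of_le_add_mul (Nat.cast_nonneg _) (apply_nonneg _ _)
    (wordNorm_indicator_ne_lt_one W) (fun n hn => ?_) hW.wordNorm_heightSpread_add_le⟩
  calc wordNorm n (fun l => (heightSpread (deposits G 0 l) : ℝ))
      ≤ wordNorm n fun _ : List V => (n : ℝ) := wordNorm_mono fun l hl => by
        rw [Nat.abs_cast, Nat.abs_cast, Nat.cast_le, ← hl]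
        exact heightSpread_deposits_zero_le G l
    _ = n := by rw [wordNorm_const, Nat.abs_cast]
    _ ≤ W.length := by exact_mod_cast hn.le

lemma isAlmostAdditive_flatMaxHeight {C : ℝ}
    (hC : ∀ n, wordNorm n (fun l => (heightSpread (deposits G 0 l) : ℝ)) ≤ C) :
    IsAlmostAdditive (flatMaxHeight G) C := by
  intro m n
  refine le_trans ?_ (hC m)
  rw [← wordNorm_take m n]
  refine wordNorm_mono fun l _ => ?_
  have hle := abs_flatMaxHeight_add_sub_le (G := G) (l.take m) (l.drop m)
  rw [List.take_append_drop] at hle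
  exact hle.trans (le_abs_self _)

lemma wordNorm_minHeight_sub_flatMaxHeight (n : ℕ) :
    wordNorm n ((fun l => (minHeight (deposits G 0 l) : ℝ)) - flatMaxHeight G) =
      wordNorm n fun l => (heightSpread (deposits G 0 l) : ℝ) := by
  rw [← map_neg_eq_map]
  congr 1
  funext l
  simp only [Pi.neg_apply, Pi.sub_apply, flatMaxHeight, ← minHeight_add_heightSpread]
  push_cast
  ring

lemma mul_le_wordVar_maxHeight {w₁ w₂ : List V} {q : ℕ} (h₁ : w₁.length = q) (h₂ : w₂.length = q)
    (hw : ∀ h, ∃ δ > 0, deposits G h w₁ = fun x => deposits G h w₂ x + δ) (k : ℕ) (h : V → ℕ) :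
    k * (1 / 4 / (Fintype.card V : ℝ) ^ q) ≤
      wordVar (k * q) fun l => (maxHeight (deposits G h l) : ℝ) := by
  induction k generalizing h with
  | zero =>
    rw [Nat.cast_zero, zero_mul]
    exact sq_nonneg _
  | succ k ih =>
    rw [Nat.succ_mul, add_comm (k * q), wordVar_append, Nat.cast_succ, add_one_mul]
    simp only [deposits_append]
    refine add_le_add ?_ (div_le_wordVar_of_one_le_sub h₁ h₂ ?_)
    · rw [← wordMean_const (V := V) q (k * (1 / 4 / (Fintype.card V : ℝ) ^ q))]
      exact wordMean_mono fun u _ => ih (deposits G h u)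
    · obtain ⟨δ, hδ, hδw⟩ := hw h
      rw [hδw, ← wordMean_sub]
      simp only [deposits_add_const, maxHeight_add_const, Nat.cast_add, add_sub_cancel_left,
        wordMean_const]
      exact_mod_cast hδ

lemma pos_of_tendsto_wordVar_flatMaxHeight_div (hG : G.Connected) (hne : G ≠ ⊤) {σ2 : ℝ}
    (hσ : Tendsto (fun n : ℕ => wordVar n (flatMaxHeight G) / n) atTop (𝓝 σ2)) : 0 < σ2 := by
  obtain ⟨W, hW⟩ := exists_isRenewalWord hG
  obtain ⟨w₁, w₂, hlen, hw⟩ := hW.exists_words_deposits_eq_add hne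
  set q := w₂.length with hq
  have hq0 : 0 < q := by
    rw [Nat.pos_iff_ne_zero]
    intro hq0
    obtain ⟨δ, hδ, hδw⟩ := hw 0
    rw [List.length_eq_zero_iff.1 (hlen.trans hq0), List.length_eq_zero_iff.1 hq0] at hδw
    have := congrFun hδw (Classical.arbitrary V)
    omega
  have hsub : Tendsto (fun k : ℕ => k * q) atTop atTop :=
    tendsto_id.atTop_mul_const' hq0
  have hpos : 0 < 1 / 4 / (Fintype.card V : ℝ) ^ q / q := by positivity
  refine hpos.trans_le (ge_of_tendsto (hσ.comp hsub) ?_)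
  filter_upwards [eventually_gt_atTop 0] with k hk
  have hle := mul_le_wordVar_maxHeight hlen hq.symm hw k 0
  rw [Function.comp_apply, Nat.cast_mul, div_le_div_iff₀ (by positivity) (by positivity)]
  calc _ = k * (1 / 4 / (Fintype.card V : ℝ) ^ q) * q := by ring
    _ ≤ _ := by
      gcongr
      exact hle

lemma wordVar_flatMaxHeight_top (n : ℕ) :
    wordVar n (flatMaxHeight (⊤ : SimpleGraph V)) = 0 := by
  have hlen (l : List V) (hl : l.length = n) : flatMaxHeight (⊤ : SimpleGraph V) l = n := by
    rw [flatMaxHeight, maxHeight_deposits_top, hl]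
  rw [wordVar, wordMean_congr hlen, wordMean_const,
    wordNorm_congr (g := 0) fun l hl => sub_eq_zero.2 (hlen l hl), map_zero, zero_pow two_ne_zero]

lemma eq_zero_iff_of_tendsto_wordVar_flatMaxHeight_div (hG : G.Connected) {σ2 : ℝ≥0}
    (hσ : Tendsto (fun n : ℕ => wordVar n (flatMaxHeight G) / n) atTop (𝓝 σ2)) :
    σ2 = 0 ↔ Nonempty (G ≃g (⊤ : SimpleGraph V)) := by
  rw [nonempty_iso_top_iff]
  refine ⟨fun h0 => ?_, ?_⟩
  · by_contra hne
    exact (pos_of_tendsto_wordVar_flatMaxHeight_div hG hne hσ).ne' (NNReal.coe_eq_zero.2 h0)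
  · rintro rfl
    simp only [wordVar_flatMaxHeight_top, zero_div] at hσ
    exact NNReal.coe_eq_zero.1 (tendsto_nhds_unique hσ tendsto_const_nhds)

end RandomDeposition

lemma IsGrowthRate.tendsto_wordMean_flatMaxHeight_div {V : Type} [Fintype V] [Nonempty V]
    {G : SimpleGraph V} {γ : ℝ} (hγ : IsGrowthRate G γ) :
    Tendsto (fun n : ℕ => wordMean n (flatMaxHeight G) / n) atTop (𝓝 (γ / Fintype.card V)) := by
  obtain ⟨_, μ, _, hX⟩ := exists_isUniformIID V
  have hN : (0 : ℝ) < Fintype.card V := Nat.cast_pos.2 Fintype.card_pos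
  have hlim := (hγ.2 μ _ hX).1
  simp only [iSup_natCast_eq_maxHeight, heightProcess_eq_deposits] at hlim
  have hmean := tendsto_integral_of_dominated_convergence (fun _ => (Fintype.card V : ℝ))
    (fun n => (hX.measurable_comp_word n fun l =>
      (Fintype.card V : ℝ) * flatMaxHeight G l / n).aestronglyMeasurable)
    (integrable_const _)
    (fun n => ae_of_all _ fun ω => by
      have hle := flatMaxHeight_le_length (G := G) (List.ofFn fun i : Fin n => ω i)
      rw [List.length_ofFn] at hle
      have h0 : 0 ≤ flatMaxHeight G (List.ofFn fun i : Fin n => ω i) := Nat.cast_nonneg _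
      rw [Real.norm_of_nonneg (by positivity), mul_div_assoc]
      exact mul_le_of_le_one_right hN.le (div_le_one_of_le₀ hle (Nat.cast_nonneg n)))
    hlim
  simp only [integral_const, probReal_univ, one_smul] at hmean
  refine (hmean.div_const (Fintype.card V : ℝ)).congr fun n => ?_
  rw [hX.integral_eq_wordMean n fun l => (Fintype.card V : ℝ) * flatMaxHeight G l / n]
  simp only [mul_div_right_comm, wordMean_const_mul]
  field_simp

open ProbabilityTheory BoundedContinuousFunction in
theorem stmt13 {V : Type} [Fintype V] [Nonempty V] (G : SimpleGraph V)
    (hG : G.Connected) (γ : ℝ) (hγ : IsGrowthRate G γ) :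
    ∃ σ2 : ℝ≥0,
      (∀ {Ω : Type} [MeasurableSpace Ω] (μ : Measure Ω) [IsProbabilityMeasure μ]
        (X : ℕ → Ω → V), IsUniformIID μ X →
        (∀ f : ℝ →ᵇ ℝ, Tendsto (fun n : ℕ =>
            ∫ ω, f (((⨆ x : V, (heightProcess G (fun _ => 0) (fun k => X k ω) n x : ℝ)) -
                n * γ / Fintype.card V) / Real.sqrt n) ∂μ)
          atTop (𝓝 (∫ x, f x ∂(gaussianReal 0 σ2)))) ∧
        (∀ f : ℝ →ᵇ ℝ, Tendsto (fun n : ℕ =>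
            ∫ ω, f (((⨅ x : V, (heightProcess G (fun _ => 0) (fun k => X k ω) n x : ℝ)) -
                n * γ / Fintype.card V) / Real.sqrt n) ∂μ)
          atTop (𝓝 (∫ x, f x ∂(gaussianReal 0 σ2))))) ∧
      (σ2 = 0 ↔ Nonempty (G ≃g (⊤ : SimpleGraph V))) := by
  obtain ⟨C, hC⟩ := exists_wordNorm_heightSpread_le hG
  have hadd := isAlmostAdditive_flatMaxHeight hC
  obtain ⟨σ2, hσ⟩ := hadd.exists_tendsto_wordVar_div
  have hα := hγ.tendsto_wordMean_flatMaxHeight_div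
  have hmax (n : ℕ) : wordNorm n (flatMaxHeight G - flatMaxHeight G) ≤ 0 := by
    rw [sub_self, map_zero]
  have hmin (n : ℕ) :
      wordNorm n ((fun l => (minHeight (deposits G 0 l) : ℝ)) - flatMaxHeight G) ≤ C :=
    (wordNorm_minHeight_sub_flatMaxHeight n).trans_le (hC n)
  refine ⟨σ2, fun μ _ X hX => ⟨fun f => ?_, fun f => ?_⟩,
    eq_zero_iff_of_tendsto_wordVar_flatMaxHeight_div hG hσ⟩
  · simp only [iSup_natCast_eq_maxHeight, heightProcess_eq_deposits, mul_div_assoc]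
    exact hX.tendsto_integral_of_isAlmostAdditive hadd hα hσ hmax f
  · simp only [iInf_natCast_eq_minHeight, heightProcess_eq_deposits, mul_div_assoc]
    exact hX.tendsto_integral_of_isAlmostAdditive hadd hα hσ hmin f
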